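/- arXiv:0711.1402 — 6 statements merged into one kernel-verified Lean document; each statement's English description precedes it below -/
import Mathlib

section
/- Let H be a weak bialgebra over a field k. Then: (1) H_t = ε_t(H) is a unital subalgebra of H (it contains 1 and is closed under multiplication) and a left coideal, i.e. Δ(H_t) ⊆ H ⊗ H_t; (2) H_s = ε_s(H) is a unital subalgebra of H and a right coideal, i.e. Δ(H_s) ⊆ H_s ⊗ H; (3) the subalgebras H_t and H_s commute elementwise: xy = yx for all x ∈ H_t and y ∈ H_s. -/
/-! Write `Δ(1) = Σᵢ aᵢ ⊗ bᵢ`. The two forms of (WBA3) read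
`Σᵢ Δ(aᵢ) ⊗ bᵢ = Σᵢⱼ aᵢ ⊗ bᵢaⱼ ⊗ bⱼ = Σᵢⱼ aᵢ ⊗ aⱼbᵢ ⊗ bⱼ`, and everything follows by applying
functionals to the legs of this identity.

* Contracting the middle leg with `ε` gives `Δ(1) = Σ aᵢ ⊗ ε_t(bᵢ) = Σ ε_s(aᵢ) ⊗ bᵢ`, so
  `Δ(1) ∈ H_s ⊗ H_t` (`comul_one_eq_εt`, `comul_one_eq_εs`).
* Contracting the first leg gives `Δ(x) = Δ(1)(x ⊗ 1)` for `x ∈ H_t`, and contracting the last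
  gives `Δ(y) = (1 ⊗ y)Δ(1)` for `y ∈ H_s` (`comul_εt`, `comul_εs`). With the previous point these
  are the coideal properties. Both formulas are stable under products by multiplicativity of `Δ`,
  and applying `ε` to one leg then yields `ε_t(xx') = xx'` and `ε_s(yy') = yy'`, hence closure
  under multiplication.
* Contracting both outer legs of the equality of the two double sums gives commutation of `H_t`
  with `H_s`. -/

open scoped TensorProduct
open TensorProduct LinearMap

/-- A weak bialgebra over a field `k`: an algebra and coalgebra subject to the
weak compatibility axioms (WBA1)-(WBA3). -/
class WeakBialgebra (k H : Type*) [Field k] [Ring H] [Algebra k H]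
    extends Coalgebra k H where
  /-- (WBA1): `Δ(xy) = Δ(x)Δ(y)`. -/
  comul_mul : ∀ x y : H,
    Coalgebra.comul (R := k) (x * y) = Coalgebra.comul (R := k) x * Coalgebra.comul (R := k) y
  /-- (WBA2): `ε(xyz) = Σ ε(xy⁽¹⁾)ε(y⁽²⁾z)`. -/
  counit_mul_mul : ∀ x y z : H,
    Coalgebra.counit (R := k) (x * y * z) =
      TensorProduct.lid k k
        ((TensorProduct.map (Coalgebra.counit ∘ₗ LinearMap.mulLeft k x)
            (Coalgebra.counit ∘ₗ LinearMap.mulRight k z))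
          (Coalgebra.comul (R := k) y))
  /-- (WBA2'): `ε(xyz) = Σ ε(xy⁽²⁾)ε(y⁽¹⁾z)`. -/
  counit_mul_mul' : ∀ x y z : H,
    Coalgebra.counit (R := k) (x * y * z) =
      TensorProduct.lid k k
        ((TensorProduct.map (Coalgebra.counit ∘ₗ LinearMap.mulRight k z)
            (Coalgebra.counit ∘ₗ LinearMap.mulLeft k x))
          (Coalgebra.comul (R := k) y))
  /-- (WBA3): `((Δ⊗id)∘Δ)(1) = (Δ(1)⊗1)·(1⊗Δ(1))`. -/
  comul_comul_one :
    (TensorProduct.map (Coalgebra.comul (R := k)) (LinearMap.id (M := H)))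
        (Coalgebra.comul (R := k) (1 : H)) =
      (Coalgebra.comul (R := k) (1 : H) ⊗ₜ[k] (1 : H)) *
        ((TensorProduct.assoc k H H H).symm ((1 : H) ⊗ₜ[k] Coalgebra.comul (R := k) (1 : H)))
  /-- (WBA3'): `((Δ⊗id)∘Δ)(1) = (1⊗Δ(1))·(Δ(1)⊗1)`. -/
  comul_comul_one' :
    (TensorProduct.map (Coalgebra.comul (R := k)) (LinearMap.id (M := H)))
        (Coalgebra.comul (R := k) (1 : H)) =
      ((TensorProduct.assoc k H H H).symm ((1 : H) ⊗ₜ[k] Coalgebra.comul (R := k) (1 : H))) *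
        (Coalgebra.comul (R := k) (1 : H) ⊗ₜ[k] (1 : H))

variable (k H : Type*) [Field k] [Ring H] [Algebra k H]

/-- The target counital map `ε_t(x) = Σ ε(1⁽¹⁾x)·1⁽²⁾`. -/
noncomputable def εt [WeakBialgebra k H] : H →ₗ[k] H :=
  (TensorProduct.lid k H).toLinearMap ∘ₗ
    (LinearMap.rTensor H (Coalgebra.counit (R := k) (A := H))) ∘ₗ
    (LinearMap.mulLeft k (Coalgebra.comul (R := k) (1 : H))) ∘ₗ
    ((TensorProduct.mk k H H).flip 1)

/-- The source counital map `ε_s(x) = Σ 1⁽¹⁾·ε(x1⁽²⁾)`. -/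
noncomputable def εs [WeakBialgebra k H] : H →ₗ[k] H :=
  (TensorProduct.rid k H).toLinearMap ∘ₗ
    (LinearMap.lTensor H (Coalgebra.counit (R := k) (A := H))) ∘ₗ
    (LinearMap.mulRight k (Coalgebra.comul (R := k) (1 : H))) ∘ₗ
    (TensorProduct.mk k H H 1)

/-- The target base algebra `H_t = ε_t(H)`. -/
noncomputable def Ht [WeakBialgebra k H] : Submodule k H := LinearMap.range (εt k H)

/-- The source base algebra `H_s = ε_s(H)`. -/
noncomputable def Hs [WeakBialgebra k H] : Submodule k H := LinearMap.range (εs k H)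

section Helpers

variable {k H} [WeakBialgebra k H] {ι : Type*}

open Coalgebra

theorem εt_eq_sum (r : Coalgebra.Repr k (1 : H) ι) (x : H) :
    εt k H x = ∑ i ∈ r.index, counit (R := k) (r.left i * x) • r.right i := by
  simp [εt, ← r.eq, Finset.sum_mul]

theorem εs_eq_sum (r : Coalgebra.Repr k (1 : H) ι) (x : H) :
    εs k H x = ∑ i ∈ r.index, counit (R := k) (x * r.right i) • r.left i := by
  simp [εs, ← r.eq, Finset.mul_sum]

/-- (WBA3) in coordinates. -/
theorem sum_comul_left (r : Coalgebra.Repr k (1 : H) ι) :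
    ∑ i ∈ r.index, comul (R := k) (r.left i) ⊗ₜ[k] r.right i =
      ∑ j ∈ r.index, ∑ i ∈ r.index,
        (r.left i ⊗ₜ[k] (r.right i * r.left j)) ⊗ₜ[k] r.right j := by
  have h := WeakBialgebra.comul_comul_one (k := k) (H := H)
  rw [← r.eq] at h
  simpa [tmul_sum, sum_tmul, Finset.sum_mul, Finset.mul_sum] using h

/-- (WBA3') in coordinates. -/
theorem sum_comul_left' (r : Coalgebra.Repr k (1 : H) ι) :
    ∑ i ∈ r.index, comul (R := k) (r.left i) ⊗ₜ[k] r.right i =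
      ∑ j ∈ r.index, ∑ i ∈ r.index,
        (r.left i ⊗ₜ[k] (r.left j * r.right i)) ⊗ₜ[k] r.right j := by
  have h := WeakBialgebra.comul_comul_one' (k := k) (H := H)
  rw [← r.eq] at h
  rw [Finset.sum_comm]
  simpa [tmul_sum, sum_tmul, Finset.sum_mul, Finset.mul_sum] using h

/-- (WBA3') in coordinates, with `Δ` moved to the second leg by coassociativity. -/
theorem sum_comul_right (r : Coalgebra.Repr k (1 : H) ι) :
    ∑ i ∈ r.index, r.left i ⊗ₜ[k] comul (R := k) (r.right i) =
      ∑ j ∈ r.index, ∑ i ∈ r.index,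
        r.left i ⊗ₜ[k] ((r.left j * r.right i) ⊗ₜ[k] r.right j) := by
  have h := congrArg (TensorProduct.assoc k H H H) (sum_comul_left' r)
  have hc := Coalgebra.coassoc_apply (R := k) (1 : H)
  rw [← r.eq] at hc
  simp only [map_sum, rTensor_tmul, lTensor_tmul, assoc_tmul] at h hc
  rw [← hc, h]

/-- The identity `Δ(1) = Σ ε(aⱼbᵢ) aᵢ ⊗ bⱼ`, from contracting the middle leg of (WBA3'). -/
theorem sum_tmul_eq_sum_counit (r : Coalgebra.Repr k (1 : H) ι) :
    ∑ i ∈ r.index, r.left i ⊗ₜ[k] r.right i =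
      ∑ j ∈ r.index, ∑ i ∈ r.index,
        (counit (R := k) (r.left j * r.right i) • r.left i) ⊗ₜ[k] r.right j := by
  have h := congrArg (rTensor H
    ((TensorProduct.rid k H).toLinearMap ∘ₗ lTensor H (counit (R := k) (A := H))))
    (sum_comul_left' r)
  simpa [map_sum] using h

theorem comul_one_eq_εt (r : Coalgebra.Repr k (1 : H) ι) :
    comul (R := k) (1 : H) = ∑ i ∈ r.index, r.left i ⊗ₜ[k] εt k H (r.right i) := by
  rw [← r.eq, sum_tmul_eq_sum_counit, Finset.sum_comm]
  simp only [εt_eq_sum r, tmul_sum, smul_tmul]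

theorem comul_one_eq_εs (r : Coalgebra.Repr k (1 : H) ι) :
    comul (R := k) (1 : H) = ∑ i ∈ r.index, εs k H (r.left i) ⊗ₜ[k] r.right i := by
  rw [← r.eq, sum_tmul_eq_sum_counit]
  simp only [εs_eq_sum r, sum_tmul]

theorem comul_εt (x : H) :
    comul (R := k) (εt k H x) = comul (R := k) 1 * (εt k H x ⊗ₜ[k] 1) := by
  let r := Coalgebra.Repr.arbitrary k (1 : H)
  have h := congrArg ((TensorProduct.lid k (H ⊗[k] H)).toLinearMap ∘ₗ
    rTensor (H ⊗[k] H) (counit (R := k) (A := H) ∘ₗ mulRight k x)) (sum_comul_right r)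
  simp only [map_sum, coe_comp, Function.comp_apply, rTensor_tmul, mulRight_apply,
    LinearEquiv.coe_coe, lid_tmul] at h
  rw [εt_eq_sum r, ← r.eq]
  simp only [map_sum, map_smul, h, Finset.sum_mul, sum_tmul, Finset.mul_sum,
    Algebra.TensorProduct.tmul_mul_tmul, mul_one, smul_tmul', mul_smul_comm]
  rw [Finset.sum_comm]

theorem comul_εs (y : H) :
    comul (R := k) (εs k H y) = (1 ⊗ₜ[k] εs k H y) * comul (R := k) 1 := by
  let r := Coalgebra.Repr.arbitrary k (1 : H)
  have h := congrArg ((TensorProduct.rid k (H ⊗[k] H)).toLinearMap ∘ₗ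
    lTensor (H ⊗[k] H) (counit (R := k) (A := H) ∘ₗ mulLeft k y)) (sum_comul_left' r)
  simp only [map_sum, coe_comp, Function.comp_apply, lTensor_tmul, mulLeft_apply,
    LinearEquiv.coe_coe, rid_tmul] at h
  rw [εs_eq_sum r, ← r.eq]
  simp only [map_sum, map_smul, h, Finset.sum_mul, tmul_sum, Finset.mul_sum,
    Algebra.TensorProduct.tmul_mul_tmul, one_mul, tmul_smul, smul_mul_assoc]
  rw [Finset.sum_comm]

/-- An element satisfying `Δ(x) = Δ(1)(x ⊗ 1)` is fixed by `ε_t`. -/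
theorem mem_Ht_of_comul {x : H} (hx : comul (R := k) x = comul (R := k) 1 * (x ⊗ₜ[k] 1)) :
    x ∈ Ht k H := by
  refine ⟨x, ?_⟩
  have h := congrArg (TensorProduct.lid k H) (Coalgebra.rTensor_counit_comul (R := k) x)
  rw [hx] at h
  simpa [εt] using h

/-- An element satisfying `Δ(y) = (1 ⊗ y)Δ(1)` is fixed by `ε_s`. -/
theorem mem_Hs_of_comul {y : H} (hy : comul (R := k) y = (1 ⊗ₜ[k] y) * comul (R := k) 1) :
    y ∈ Hs k H := by
  refine ⟨y, ?_⟩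
  have h := congrArg (TensorProduct.rid k H) (Coalgebra.lTensor_counit_comul (R := k) y)
  rw [hy] at h
  simpa [εs] using h

theorem mul_mem_Ht (x y : H) : εt k H x * εt k H y ∈ Ht k H := by
  apply mem_Ht_of_comul
  -- `Δ(u)Δ(v) = Δ(u)Δ(1)(v ⊗ 1) = Δ(u)(v ⊗ 1) = Δ(1)(uv ⊗ 1)`
  rw [WeakBialgebra.comul_mul, comul_εt y, ← mul_assoc, ← WeakBialgebra.comul_mul, mul_one,
    comul_εt x, mul_assoc, Algebra.TensorProduct.tmul_mul_tmul, mul_one]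

theorem mul_mem_Hs (x y : H) : εs k H x * εs k H y ∈ Hs k H := by
  apply mem_Hs_of_comul
  -- `Δ(u)Δ(v) = (1 ⊗ u)Δ(1)Δ(v) = (1 ⊗ u)Δ(v) = (1 ⊗ uv)Δ(1)`
  rw [WeakBialgebra.comul_mul, comul_εs x, mul_assoc, ← WeakBialgebra.comul_mul, one_mul,
    comul_εs y, ← mul_assoc, Algebra.TensorProduct.tmul_mul_tmul, one_mul]

theorem εt_mul_εs_comm (x y : H) : εt k H x * εs k H y = εs k H y * εt k H x := by
  let r := Coalgebra.Repr.arbitrary k (1 : H)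
  -- apply `ε(· x)` to the first leg and `ε(y ·)` to the third leg of (WBA3) and (WBA3')
  have h := congrArg ((TensorProduct.rid k H).toLinearMap ∘ₗ
    TensorProduct.map ((TensorProduct.lid k H).toLinearMap ∘ₗ
      rTensor H (counit (R := k) (A := H) ∘ₗ mulRight k x))
      (counit (R := k) (A := H) ∘ₗ mulLeft k y))
    ((sum_comul_left r).symm.trans (sum_comul_left' r))
  simp only [map_sum, coe_comp, Function.comp_apply, rTensor_tmul, mulLeft_apply, map_tmul,
    mulRight_apply, LinearEquiv.coe_coe, rid_tmul, lid_tmul] at h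
  rw [εs_eq_sum r, εt_eq_sum r]
  simp only [Finset.sum_mul, Finset.mul_sum, smul_mul_assoc, mul_smul_comm,
    Finset.smul_sum]
  rw [h]
  refine Finset.sum_comm.trans ?_
  exact Finset.sum_congr rfl fun i _ => Finset.sum_congr rfl fun j _ => smul_comm _ _ _

end Helpers

/-- In a weak bialgebra over a field: `H_t` is a unital subalgebra
and a left coideal (`Δ(H_t) ⊆ H ⊗ H_t`), `H_s` is a unital subalgebra and a right
coideal (`Δ(H_s) ⊆ H_s ⊗ H`), and `H_t` and `H_s` commute elementwise. -/
theorem base_algebras_subalgebras_coideals_commute [WeakBialgebra k H] :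
    ((1 : H) ∈ Ht k H) ∧
    (∀ a ∈ Ht k H, ∀ b ∈ Ht k H, a * b ∈ Ht k H) ∧
    (∀ x ∈ Ht k H, Coalgebra.comul (R := k) x ∈
      LinearMap.range (LinearMap.lTensor H (Ht k H).subtype)) ∧
    ((1 : H) ∈ Hs k H) ∧
    (∀ a ∈ Hs k H, ∀ b ∈ Hs k H, a * b ∈ Hs k H) ∧
    (∀ x ∈ Hs k H, Coalgebra.comul (R := k) x ∈
      LinearMap.range (LinearMap.rTensor H (Hs k H).subtype)) ∧
    (∀ x ∈ Ht k H, ∀ y ∈ Hs k H, x * y = y * x) := by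
  let r := Coalgebra.Repr.arbitrary k (1 : H)
  refine ⟨?_, ?_, ?_, ?_, ?_, ?_, ?_⟩
  · exact mem_Ht_of_comul (by rw [← Algebra.TensorProduct.one_def, mul_one])
  · rintro _ ⟨x, rfl⟩ _ ⟨y, rfl⟩
    exact mul_mem_Ht x y
  · rintro _ ⟨x, rfl⟩
    rw [comul_εt, comul_one_eq_εt r, Finset.sum_mul]
    refine Submodule.sum_mem _ fun i _ =>
      ⟨(r.left i * εt k H x) ⊗ₜ[k] (⟨εt k H (r.right i), _, rfl⟩ : Ht k H), ?_⟩
    simp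
  · exact mem_Hs_of_comul (by rw [← Algebra.TensorProduct.one_def, one_mul])
  · rintro _ ⟨x, rfl⟩ _ ⟨y, rfl⟩
    exact mul_mem_Hs x y
  · rintro _ ⟨y, rfl⟩
    rw [comul_εs, comul_one_eq_εs r, Finset.mul_sum]
    refine Submodule.sum_mem _ fun i _ =>
      ⟨(⟨εs k H (r.left i), _, rfl⟩ : Hs k H) ⊗ₜ[k] (εs k H y * r.right i), ?_⟩
    simp
  · rintro _ ⟨x, rfl⟩ _ ⟨y, rfl⟩
    exact εt_mul_εs_comm x y
end

section
/- Let H be a weak bialgebra over a field k and let (V, β_V), (W, β_W) be right H-comodules. Define the linear map P_{V,W} : V⊗W → V⊗W by P_{V,W}(v⊗w) = Σ (v_V ⊗ w_W)·ε(v_H·w_H). Then P_{V,W} is idempotent (P_{V,W}∘P_{V,W} = P_{V,W}), the linear map β : V⊗W → (V⊗W)⊗H, v⊗w ↦ Σ (v_V⊗w_W)⊗(v_H·w_H), maps the image V⊗̂W = P_{V,W}(V⊗W) into (V⊗̂W)⊗H, and its restriction makes V⊗̂W a right H-comodule. -/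
/-!
Everything follows from the coassociativity of `β = coactTrunc` on all of `V ⊗ W`, which is a
consequence of `Δ(xy) = Δ(x)Δ(y)`. Since `P = (id ⊗ ε) ∘ β`, applying `id ⊗ ε ⊗ id` to the
coassociativity identity `(β ⊗ id) ∘ β = (id ⊗ Δ) ∘ β` and using the counit law of `H` gives
`(P ⊗ id) ∘ β = β`. A further application of `id ⊗ ε` gives `P ∘ P = P`. So `β` takes values in
`(range P) ⊗ H`, and the corestriction `(P ⊗ id) ∘ β` is counital on `range P` because `P` is the
identity there; it inherits coassociativity from `β`.

Everything after coassociativity uses only that `β` is a coassociative, not necessarily counital, coaction, and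
is carried out in that generality in `exists_comodule_range`.
-/

open scoped TensorProduct
open TensorProduct LinearMap

variable (k H : Type*) [Field k] [Ring H] [Algebra k H]

section Truncated

variable {k H : Type*} [Field k] [Ring H] [Algebra k H] [WeakBialgebra k H]
variable {V W : Type*} [AddCommGroup V] [Module k V] [AddCommGroup W] [Module k W]

variable (k) in
/-- The idempotent `P_{V,W}(v⊗w) = Σ (v_V ⊗ w_W)·ε(v_H·w_H)` on `V ⊗ W`,
whose image is the truncated tensor product `V ⊗̂ W`. -/
noncomputable def Ptrunc (βV : V →ₗ[k] V ⊗[k] H) (βW : W →ₗ[k] W ⊗[k] H) :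
    (V ⊗[k] W) →ₗ[k] V ⊗[k] W :=
  (TensorProduct.rid k (V ⊗[k] W)).toLinearMap ∘ₗ
    (LinearMap.lTensor (V ⊗[k] W) ((Coalgebra.counit (R := k) (A := H)) ∘ₗ LinearMap.mul' k H)) ∘ₗ
    (TensorProduct.tensorTensorTensorComm k V H W H).toLinearMap ∘ₗ
    (TensorProduct.map βV βW)

variable (k) in
/-- The coaction `v⊗w ↦ Σ (v_V ⊗ w_W) ⊗ (v_H·w_H)` on `V ⊗ W`, restricting to the
coaction of the truncated tensor product `V ⊗̂ W`. -/
noncomputable def coactTrunc (βV : V →ₗ[k] V ⊗[k] H) (βW : W →ₗ[k] W ⊗[k] H) :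
    (V ⊗[k] W) →ₗ[k] (V ⊗[k] W) ⊗[k] H :=
  (LinearMap.lTensor (V ⊗[k] W) (LinearMap.mul' k H)) ∘ₗ
    (TensorProduct.tensorTensorTensorComm k V H W H).toLinearMap ∘ₗ
    (TensorProduct.map βV βW)

variable (k) in
/-- The ambient form of the left unit constraint: `h ⊗ v ↦ Σ v_V·ε(h·v_H)`. -/
noncomputable def lamAmb (βV : V →ₗ[k] V ⊗[k] H) : H ⊗[k] V →ₗ[k] V :=
  (TensorProduct.rid k V).toLinearMap ∘ₗ
    (LinearMap.lTensor V ((Coalgebra.counit (R := k) (A := H)) ∘ₗ LinearMap.mul' k H)) ∘ₗ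
    (TensorProduct.assoc k V H H).toLinearMap ∘ₗ
    (LinearMap.rTensor H (TensorProduct.comm k H V).toLinearMap) ∘ₗ
    ((TensorProduct.assoc k H V H).symm.toLinearMap) ∘ₗ
    (LinearMap.lTensor H βV)

variable (k) in
/-- The ambient form of the inverse left unit constraint:
`v ↦ Σ (1⁽¹⁾ ⊗ v_V)·ε(1⁽²⁾·v_H)`. -/
noncomputable def lamInvAmb (βV : V →ₗ[k] V ⊗[k] H) : V →ₗ[k] H ⊗[k] V :=
  (TensorProduct.rid k (H ⊗[k] V)).toLinearMap ∘ₗ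
    (LinearMap.lTensor (H ⊗[k] V) ((Coalgebra.counit (R := k) (A := H)) ∘ₗ LinearMap.mul' k H)) ∘ₗ
    (TensorProduct.tensorTensorTensorComm k H H V H).toLinearMap ∘ₗ
    ((TensorProduct.mk k (H ⊗[k] H) (V ⊗[k] H)) (Coalgebra.comul (R := k) (1 : H))) ∘ₗ βV

variable (k) in
/-- The ambient form of the right unit constraint: `v ⊗ h ↦ Σ v_V·ε(v_H·h)`. -/
noncomputable def rhoAmb (βV : V →ₗ[k] V ⊗[k] H) : V ⊗[k] H →ₗ[k] V :=
  (TensorProduct.rid k V).toLinearMap ∘ₗ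
    (LinearMap.lTensor V ((Coalgebra.counit (R := k) (A := H)) ∘ₗ LinearMap.mul' k H)) ∘ₗ
    (TensorProduct.assoc k V H H).toLinearMap ∘ₗ
    (LinearMap.rTensor H βV)

variable (k) in
/-- The ambient form of the inverse right unit constraint: `v ↦ Σ v_V ⊗ ε_s(v_H)`. -/
noncomputable def rhoInvAmb (βV : V →ₗ[k] V ⊗[k] H) : V →ₗ[k] V ⊗[k] H :=
  (LinearMap.lTensor V (εs k H)) ∘ₗ βV

end Truncated

/-- A coassociative coaction satisfies `(P ⊗ id) ∘ β = β` for `P = (id ⊗ ε) ∘ β`. -/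
theorem rTensor_counit_coact {k H M : Type*} [Field k] [Ring H] [Algebra k H] [Coalgebra k H]
    [AddCommGroup M] [Module k M] (β : M →ₗ[k] M ⊗[k] H)
    (hβ : ∀ m, TensorProduct.assoc k M H H (LinearMap.rTensor H β (β m)) =
      LinearMap.lTensor M (Coalgebra.comul (R := k) (A := H)) (β m))
    (P : M →ₗ[k] M)
    (hP : ∀ m, P m = TensorProduct.rid k M
      (LinearMap.lTensor M (Coalgebra.counit (R := k) (A := H)) (β m))) (m : M) :
    LinearMap.rTensor H P (β m) = β m := by
  -- `G = id ⊗ (ε ⊗ id)`, to be applied to both sides of coassociativity.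
  let G : M ⊗[k] (H ⊗[k] H) →ₗ[k] M ⊗[k] H :=
    LinearMap.lTensor M ((TensorProduct.lid k H).toLinearMap ∘ₗ
      LinearMap.rTensor H (Coalgebra.counit (R := k) (A := H)))
  have hG : ∀ (x : M ⊗[k] H) (h : H), G (TensorProduct.assoc k M H H (x ⊗ₜ h)) =
      (TensorProduct.rid k M
        (LinearMap.lTensor M (Coalgebra.counit (R := k) (A := H)) x)) ⊗ₜ h := by
    intro x h
    induction x with
    | zero => simp
    | add a b ha hb => simp only [TensorProduct.add_tmul, map_add, ha, hb]
    | tmul a b => simp [G, TensorProduct.smul_tmul]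
  have h1 : ∀ t : M ⊗[k] H,
      G (TensorProduct.assoc k M H H (LinearMap.rTensor H β t)) = LinearMap.rTensor H P t := by
    intro t
    induction t with
    | zero => simp
    | add a b ha hb => simp only [map_add, ha, hb]
    | tmul a b => rw [LinearMap.rTensor_tmul, hG, LinearMap.rTensor_tmul, hP]
  have h2 : ∀ t : M ⊗[k] H,
      G (LinearMap.lTensor M (Coalgebra.comul (R := k) (A := H)) t) = t := by
    intro t
    induction t with
    | zero => simp
    | add a b ha hb => simp only [map_add, ha, hb]
    | tmul a b => simp [G]
  rw [← h1, hβ, h2]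

/-- For a coassociative coaction `β` on `M`, the map `P = (id ⊗ ε) ∘ β` is idempotent and `β`
restricts to a comodule structure on `range P`. -/
theorem exists_comodule_range {k H M : Type*} [Field k] [Ring H] [Algebra k H] [Coalgebra k H]
    [AddCommGroup M] [Module k M] (β : M →ₗ[k] M ⊗[k] H)
    (hβ : ∀ m, TensorProduct.assoc k M H H (LinearMap.rTensor H β (β m)) =
      LinearMap.lTensor M (Coalgebra.comul (R := k) (A := H)) (β m))
    (P : M →ₗ[k] M)
    (hP : ∀ m, P m = TensorProduct.rid k M
      (LinearMap.lTensor M (Coalgebra.counit (R := k) (A := H)) (β m))) :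
    (P ∘ₗ P = P) ∧
    (∀ z ∈ LinearMap.range P,
      β z ∈ LinearMap.range (LinearMap.rTensor H (LinearMap.range P).subtype)) ∧
    ∃ β' : ↥(LinearMap.range P) →ₗ[k] ↥(LinearMap.range P) ⊗[k] H,
      (∀ z : ↥(LinearMap.range P),
        (LinearMap.rTensor H (LinearMap.range P).subtype) (β' z) = β (z : M)) ∧
      (∀ z : ↥(LinearMap.range P),
        TensorProduct.rid k ↥(LinearMap.range P)
          ((LinearMap.lTensor ↥(LinearMap.range P)
            (Coalgebra.counit (R := k) (A := H))) (β' z)) = z) ∧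
      (∀ z : ↥(LinearMap.range P),
        (TensorProduct.assoc k ↥(LinearMap.range P) H H) ((LinearMap.rTensor H β') (β' z)) =
          (LinearMap.lTensor ↥(LinearMap.range P)
            (Coalgebra.comul (R := k) (A := H))) (β' z)) := by
  have hPβ := rTensor_counit_coact β hβ P hP
  have hridP : ∀ t : M ⊗[k] H, P (TensorProduct.rid k M
      (LinearMap.lTensor M (Coalgebra.counit (R := k) (A := H)) t)) = TensorProduct.rid k M
      (LinearMap.lTensor M (Coalgebra.counit (R := k) (A := H)) (LinearMap.rTensor H P t)) := by
    intro t
    induction t with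
    | zero => simp
    | add a b ha hb => simp only [map_add, ha, hb]
    | tmul a b => simp
  have hPP : ∀ m, P (P m) = P m := by
    intro m
    conv_lhs => rw [hP m]
    rw [hridP, hPβ, ← hP]
  let β₀ : M →ₗ[k] ↥(LinearMap.range P) ⊗[k] H := LinearMap.rTensor H P.rangeRestrict ∘ₗ β
  have hβ₀ : ∀ m, LinearMap.rTensor H (LinearMap.range P).subtype (β₀ m) = β m := by
    intro m
    simp only [β₀, LinearMap.comp_apply]
    rw [← LinearMap.rTensor_comp_apply, LinearMap.subtype_comp_codRestrict]
    exact hPβ m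
  refine ⟨LinearMap.ext hPP, fun z _ => ⟨β₀ z, hβ₀ z⟩, β₀ ∘ₗ (LinearMap.range P).subtype,
    fun z => hβ₀ z, ?_, ?_⟩
  · intro z
    have key : ∀ t : ↥(LinearMap.range P) ⊗[k] H,
        ((TensorProduct.rid k ↥(LinearMap.range P)
          (LinearMap.lTensor _ (Coalgebra.counit (R := k) (A := H)) t) :
            ↥(LinearMap.range P)) : M) = TensorProduct.rid k M
        (LinearMap.lTensor M (Coalgebra.counit (R := k) (A := H))
          (LinearMap.rTensor H (LinearMap.range P).subtype t)) := by
      intro t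
      induction t with
      | zero => simp
      | add a b ha hb => simp only [map_add, Submodule.coe_add, ha, hb]
      | tmul a b => simp
    apply Subtype.ext
    rw [key]
    simp only [LinearMap.comp_apply, Submodule.subtype_apply]
    rw [hβ₀, ← hP]
    obtain ⟨_, y, rfl⟩ := z
    exact hPP y
  · intro z
    simp only [LinearMap.comp_apply, Submodule.subtype_apply]
    -- Both sides are the images under `P ⊗ id ⊗ id` of the two sides of coassociativity of `β`.
    have h1 : LinearMap.rTensor H (β₀ ∘ₗ (LinearMap.range P).subtype) (β₀ z) =
        LinearMap.rTensor H (LinearMap.rTensor H P.rangeRestrict) (LinearMap.rTensor H β (β z)) := by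
      rw [LinearMap.rTensor_comp_apply, hβ₀]
      simp only [β₀]
      rw [LinearMap.rTensor_comp_apply]
    have h2 : ∀ t : (M ⊗[k] H) ⊗[k] H, TensorProduct.assoc k ↥(LinearMap.range P) H H
        (LinearMap.rTensor H (LinearMap.rTensor H P.rangeRestrict) t) =
        LinearMap.rTensor (H ⊗[k] H) P.rangeRestrict (TensorProduct.assoc k M H H t) := by
      intro t
      induction t with
      | zero => simp
      | add a b ha hb => simp only [map_add, ha, hb]
      | tmul a b =>
        induction a with
        | zero => simp
        | add c d hc hd => simp only [map_add, TensorProduct.add_tmul, hc, hd]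
        | tmul c d => simp
    rw [h1, h2, hβ]
    simp only [β₀, LinearMap.comp_apply]
    exact LinearMap.congr_fun ((LinearMap.rTensor_comp_lTensor _ _ _).trans
      (LinearMap.lTensor_comp_rTensor _ _ _).symm) (β z)

/-- `β = coactTrunc` is coassociative on all of `V ⊗ W`, because `Δ` is multiplicative. -/
theorem coactTrunc_coassoc {k H V W : Type*} [Field k] [Ring H] [Algebra k H]
    [WeakBialgebra k H] [AddCommGroup V] [Module k V] [AddCommGroup W] [Module k W]
    (βV : V →ₗ[k] V ⊗[k] H) (βW : W →ₗ[k] W ⊗[k] H)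
    (hV2 : ∀ v : V,
      (TensorProduct.assoc k V H H) ((LinearMap.rTensor H βV) (βV v)) =
        (LinearMap.lTensor V (Coalgebra.comul (R := k) (A := H))) (βV v))
    (hW2 : ∀ w : W,
      (TensorProduct.assoc k W H H) ((LinearMap.rTensor H βW) (βW w)) =
        (LinearMap.lTensor W (Coalgebra.comul (R := k) (A := H))) (βW w)) (z : V ⊗[k] W) :
    TensorProduct.assoc k (V ⊗[k] W) H H
        (LinearMap.rTensor H (coactTrunc k βV βW) (coactTrunc k βV βW z)) =
      LinearMap.lTensor (V ⊗[k] W) (Coalgebra.comul (R := k) (A := H))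
        (coactTrunc k βV βW z) := by
  -- `F(v ⊗ s, w ⊗ t) = (v ⊗ w) ⊗ st`, with `st` the product in `H ⊗ H`; both sides have the form
  -- `F(_, _)`, evaluated at the two sides of the coassociativity identities of `βV` and `βW`.
  let F : (V ⊗[k] (H ⊗[k] H)) ⊗[k] (W ⊗[k] (H ⊗[k] H)) →ₗ[k] (V ⊗[k] W) ⊗[k] (H ⊗[k] H) :=
    LinearMap.lTensor (V ⊗[k] W) (LinearMap.mul' k (H ⊗[k] H)) ∘ₗ
      (TensorProduct.tensorTensorTensorComm k V (H ⊗[k] H) W (H ⊗[k] H)).toLinearMap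
  let m : (V ⊗[k] H) ⊗[k] (W ⊗[k] H) →ₗ[k] (V ⊗[k] W) ⊗[k] H :=
    LinearMap.lTensor (V ⊗[k] W) (LinearMap.mul' k H) ∘ₗ
      (TensorProduct.tensorTensorTensorComm k V H W H).toLinearMap
  have hc : ∀ v w, coactTrunc k βV βW (v ⊗ₜ w) = m (βV v ⊗ₜ βW w) := fun _ _ => rfl
  have h0 : ∀ (x : V ⊗[k] H) (y : W ⊗[k] H) (g h : H),
      TensorProduct.assoc k (V ⊗[k] W) H H (m (x ⊗ₜ y) ⊗ₜ (g * h)) =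
        F (TensorProduct.assoc k V H H (x ⊗ₜ g) ⊗ₜ TensorProduct.assoc k W H H (y ⊗ₜ h)) := by
    intro x y g h
    induction x with
    | zero => simp
    | add a b ha hb => simp only [map_add, TensorProduct.add_tmul, ha, hb]
    | tmul a b =>
      induction y with
      | zero => simp
      | add c d hc hd => simp only [map_add, TensorProduct.add_tmul, TensorProduct.tmul_add, hc, hd]
      | tmul c d => simp [m, F]
  have h1 : ∀ (a : V ⊗[k] H) (b : W ⊗[k] H),
      TensorProduct.assoc k (V ⊗[k] W) H H
        (LinearMap.rTensor H (coactTrunc k βV βW) (m (a ⊗ₜ b))) =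
      F (TensorProduct.assoc k V H H (LinearMap.rTensor H βV a) ⊗ₜ
        TensorProduct.assoc k W H H (LinearMap.rTensor H βW b)) := by
    intro x y
    induction x with
    | zero => simp
    | add a b ha hb => simp only [map_add, TensorProduct.add_tmul, ha, hb]
    | tmul a b =>
      induction y with
      | zero => simp
      | add c d hc hd => simp only [map_add, TensorProduct.tmul_add, hc, hd]
      | tmul c d =>
        rw [LinearMap.rTensor_tmul, LinearMap.rTensor_tmul, ← h0, ← hc]
        simp [m]
  have h2 : ∀ (a : V ⊗[k] H) (b : W ⊗[k] H),
      LinearMap.lTensor (V ⊗[k] W) (Coalgebra.comul (R := k) (A := H)) (m (a ⊗ₜ b)) =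
      F (LinearMap.lTensor V (Coalgebra.comul (R := k) (A := H)) a ⊗ₜ
        LinearMap.lTensor W (Coalgebra.comul (R := k) (A := H)) b) := by
    intro x y
    induction x with
    | zero => simp
    | add a b ha hb => simp only [map_add, TensorProduct.add_tmul, ha, hb]
    | tmul a b =>
      induction y with
      | zero => simp
      | add c d hc hd => simp only [map_add, TensorProduct.tmul_add, hc, hd]
      | tmul c d => simp [m, F, WeakBialgebra.comul_mul]
  induction z with
  | zero => simp
  | add a b ha hb => simp only [map_add, ha, hb]
  | tmul v w => rw [hc, h1, h2, hV2, hW2]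

theorem Ptrunc_eq_counit_coactTrunc {k H V W : Type*} [Field k] [Ring H] [Algebra k H]
    [WeakBialgebra k H] [AddCommGroup V] [Module k V] [AddCommGroup W] [Module k W]
    (βV : V →ₗ[k] V ⊗[k] H) (βW : W →ₗ[k] W ⊗[k] H) (z : V ⊗[k] W) :
    Ptrunc k βV βW z = TensorProduct.rid k (V ⊗[k] W)
      (LinearMap.lTensor (V ⊗[k] W) (Coalgebra.counit (R := k) (A := H))
        (coactTrunc k βV βW z)) := by
  simp only [Ptrunc, coactTrunc, LinearMap.comp_apply, LinearMap.lTensor_comp,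
    LinearEquiv.coe_coe]

/-- For right comodules `V`, `W` of a weak bialgebra over a field,
the map `P_{V,W}(v⊗w) = Σ (v_V⊗w_W)·ε(v_H·w_H)` is idempotent, the coaction
`v⊗w ↦ Σ (v_V⊗w_W)⊗(v_H·w_H)` maps the image `V⊗̂W` of `P_{V,W}` into `(V⊗̂W)⊗H`,
and its restriction makes `V⊗̂W` a right `H`-comodule. -/
theorem truncated_tensor_comodule [WeakBialgebra k H]
    {V W : Type*} [AddCommGroup V] [Module k V] [AddCommGroup W] [Module k W]
    (βV : V →ₗ[k] V ⊗[k] H) (βW : W →ₗ[k] W ⊗[k] H)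
    (hV1 : ∀ v : V,
      TensorProduct.rid k V
        ((LinearMap.lTensor V (Coalgebra.counit (R := k) (A := H))) (βV v)) = v)
    (hV2 : ∀ v : V,
      (TensorProduct.assoc k V H H) ((LinearMap.rTensor H βV) (βV v)) =
        (LinearMap.lTensor V (Coalgebra.comul (R := k) (A := H))) (βV v))
    (hW1 : ∀ w : W,
      TensorProduct.rid k W
        ((LinearMap.lTensor W (Coalgebra.counit (R := k) (A := H))) (βW w)) = w)
    (hW2 : ∀ w : W,
      (TensorProduct.assoc k W H H) ((LinearMap.rTensor H βW) (βW w)) =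
        (LinearMap.lTensor W (Coalgebra.comul (R := k) (A := H))) (βW w)) :
    (Ptrunc k βV βW ∘ₗ Ptrunc k βV βW = Ptrunc k βV βW) ∧
    (∀ z ∈ LinearMap.range (Ptrunc k βV βW),
      coactTrunc k βV βW z ∈
        LinearMap.range (LinearMap.rTensor H (LinearMap.range (Ptrunc k βV βW)).subtype)) ∧
    ∃ β' : ↥(LinearMap.range (Ptrunc k βV βW)) →ₗ[k]
        ↥(LinearMap.range (Ptrunc k βV βW)) ⊗[k] H,
      (∀ z : ↥(LinearMap.range (Ptrunc k βV βW)),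
        (LinearMap.rTensor H (LinearMap.range (Ptrunc k βV βW)).subtype) (β' z) =
          coactTrunc k βV βW (z : V ⊗[k] W)) ∧
      (∀ z : ↥(LinearMap.range (Ptrunc k βV βW)),
        TensorProduct.rid k ↥(LinearMap.range (Ptrunc k βV βW))
          ((LinearMap.lTensor ↥(LinearMap.range (Ptrunc k βV βW))
            (Coalgebra.counit (R := k) (A := H))) (β' z)) = z) ∧
      (∀ z : ↥(LinearMap.range (Ptrunc k βV βW)),
        (TensorProduct.assoc k ↥(LinearMap.range (Ptrunc k βV βW)) H H)
            ((LinearMap.rTensor H β') (β' z)) =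
          (LinearMap.lTensor ↥(LinearMap.range (Ptrunc k βV βW))
            (Coalgebra.comul (R := k) (A := H))) (β' z)) := by
  exact exists_comodule_range (coactTrunc k βV βW) (coactTrunc_coassoc βV βW hV2 hW2)
    (Ptrunc k βV βW) (Ptrunc_eq_counit_coactTrunc βV βW)
end

section
/- Let H be a weak bialgebra over a field k and (V, β_V) a right H-comodule. Then the linear maps λ_V : H_s⊗̂V → V, h⊗v ↦ Σ v_V·ε(h·v_H), and ρ_V : V⊗̂H_s → V, v⊗h ↦ Σ v_V·ε(v_H·h), are isomorphisms of right H-comodules, with inverses given by λ_V⁻¹(v) = Σ (1⁽¹⁾ ⊗ v_V)·ε(1⁽²⁾·v_H) and ρ_V⁻¹(v) = Σ v_V ⊗ ε_s(v_H). -/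
/-!
Everything rests on the coproduct of elements of the source base algebra. Contracting the last leg
of the two forms of `Δ²(1)` in (WBA3) gives `Δ(h) = Σ 1⁽¹⁾ ⊗ 1⁽²⁾h = Σ 1⁽¹⁾ ⊗ h1⁽²⁾` for `h ∈ H_s`
(`comul_of_mem_Hs`, `comul_of_mem_Hs'`). Multiplying by `Δ(x)` and applying the counit to the second
leg yields `Σ x⁽¹⁾ε(x⁽²⁾h) = xh` and `Σ x⁽¹⁾ε(hx⁽²⁾) = hx`. By coassociativity,
`β_V(ρ_V(v ⊗ h)) = Σ v_V ⊗ v_H h` and `β_V(λ_V(h ⊗ v)) = Σ v_V ⊗ h v_H`.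

These two formulas show that `ρ_V` and `λ_V` are comodule maps, since by multiplicativity of `Δ`
the other side of each intertwining identity has the same value. They also show that `ρ_V⁻¹ ∘ ρ_V`
and `λ_V⁻¹ ∘ λ_V` coincide on `V ⊗ H_s` and `H_s ⊗ V` with the truncation idempotents
(`subtype_Ptrunc_right`, `subtype_Ptrunc_left`). The opposite compositions are the identity because
`Δ(x)Δ(1) = Δ(x) = Δ(1)Δ(x)`. Finally, `λ_V⁻¹` takes values in `H_s ⊗ V` because
`(ε_s ⊗ id)Δ(1) = Δ(1)`. The remaining step is formal (`inverse_on_range`).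
-/

open scoped TensorProduct
open TensorProduct LinearMap

variable (k H : Type*) [Field k] [Ring H] [Algebra k H]

/-! ### The source base algebra -/

section SourceBase

variable {k H : Type*} [Field k] [Ring H] [Algebra k H] [WeakBialgebra k H]

local notation "Δ" => Coalgebra.comul (R := k) (A := H)
local notation "ε" => Coalgebra.counit (R := k) (A := H)

lemma comul_mul_comul_one (x : H) : Δ x * Δ 1 = Δ x := by
  rw [← WeakBialgebra.comul_mul, mul_one]

lemma comul_one_mul_comul (x : H) : Δ 1 * Δ x = Δ x := by
  rw [← WeakBialgebra.comul_mul, one_mul]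

/-- Contraction of the second tensor leg by a functional, `a ⊗ x ↦ f(x)·a`. -/
noncomputable def contr {M N : Type*} [AddCommGroup M] [Module k M] [AddCommGroup N] [Module k N]
    (f : N →ₗ[k] k) : M ⊗[k] N →ₗ[k] M :=
  (TensorProduct.rid k M).toLinearMap ∘ₗ LinearMap.lTensor M f

@[simp]
lemma contr_tmul {M N : Type*} [AddCommGroup M] [Module k M] [AddCommGroup N] [Module k N]
    (f : N →ₗ[k] k) (a : M) (x : N) : contr f (a ⊗ₜ[k] x) = f x • a := by
  simp [contr]

lemma contr_counit_comul (x : H) : contr (M := H) ε (Δ x) = x := by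
  simp [contr]

lemma εs_apply (x : H) : εs k H x = contr (ε ∘ₗ LinearMap.mulLeft k x) (Δ 1) := by
  have key : ∀ t : H ⊗[k] H, TensorProduct.rid k H (LinearMap.lTensor H ε ((1 ⊗ₜ[k] x) * t)) =
      contr (ε ∘ₗ LinearMap.mulLeft k x) t := by
    intro t
    induction t with
    | zero => simp
    | tmul a b => simp
    | add a b ha hb => simp only [mul_add, map_add, ha, hb]
  exact key (Δ 1)

/-- `(Δ ⊗ id)` commutes with contracting the last leg. -/
lemma contr_map_comul (f : H →ₗ[k] k) (t : H ⊗[k] H) :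
    contr f (TensorProduct.map Δ (LinearMap.id (M := H)) t) = Δ (contr f t) := by
  induction t with
  | zero => simp
  | tmul a b => simp
  | add a b ha hb => simp only [map_add, ha, hb]

/-- `Δ(h) = Σ 1⁽¹⁾ ⊗ 1⁽²⁾h` for `h` in the source base algebra. -/
lemma comul_of_mem_Hs {h : H} (hh : h ∈ Hs k H) : Δ h = Δ 1 * (1 ⊗ₜ[k] h) := by
  obtain ⟨x, rfl⟩ := hh
  have key : ∀ s t : H ⊗[k] H,
      contr (ε ∘ₗ LinearMap.mulLeft k x)
        ((s ⊗ₜ[k] (1 : H)) * ((TensorProduct.assoc k H H H).symm ((1 : H) ⊗ₜ[k] t))) =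
      s * (1 ⊗ₜ[k] contr (ε ∘ₗ LinearMap.mulLeft k x) t) := by
    intro s t
    induction t with
    | zero => simp
    | tmul a b =>
      induction s with
      | zero => simp
      | tmul c d => simp [TensorProduct.tmul_smul]
      | add c d hc hd => simp only [add_mul, TensorProduct.add_tmul, map_add, hc, hd]
    | add a b ha hb => simp only [mul_add, TensorProduct.tmul_add, map_add, ha, hb]
  rw [εs_apply, ← key, ← contr_map_comul, WeakBialgebra.comul_comul_one]

/-- `Δ(h) = Σ 1⁽¹⁾ ⊗ h1⁽²⁾` for `h` in the source base algebra. -/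
lemma comul_of_mem_Hs' {h : H} (hh : h ∈ Hs k H) : Δ h = (1 ⊗ₜ[k] h) * Δ 1 := by
  obtain ⟨x, rfl⟩ := hh
  have key : ∀ s t : H ⊗[k] H,
      contr (ε ∘ₗ LinearMap.mulLeft k x)
        (((TensorProduct.assoc k H H H).symm ((1 : H) ⊗ₜ[k] t)) * (s ⊗ₜ[k] (1 : H))) =
      (1 ⊗ₜ[k] contr (ε ∘ₗ LinearMap.mulLeft k x) t) * s := by
    intro s t
    induction t with
    | zero => simp
    | tmul a b =>
      induction s with
      | zero => simp
      | tmul c d => simp [TensorProduct.tmul_smul]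
      | add c d hc hd => simp only [mul_add, TensorProduct.add_tmul, map_add, hc, hd]
    | add a b ha hb => simp only [add_mul, TensorProduct.tmul_add, map_add, ha, hb]
  rw [εs_apply, ← key, ← contr_map_comul, WeakBialgebra.comul_comul_one']

/-- `Σ x⁽¹⁾ε(x⁽²⁾h) = xh` for `h` in the source base algebra. -/
lemma contr_mulRight_comul {h : H} (hh : h ∈ Hs k H) :
    contr (ε ∘ₗ LinearMap.mulRight k h) ∘ₗ Δ = LinearMap.mulRight k h := by
  have key : ∀ t : H ⊗[k] H, contr (M := H) (ε ∘ₗ LinearMap.mulRight k h) t =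
      contr (M := H) ε (t * (1 ⊗ₜ[k] h)) := by
    intro t
    induction t with
    | zero => simp
    | tmul a b => simp
    | add a b ha hb => simp only [add_mul, map_add, ha, hb]
  ext x
  rw [LinearMap.comp_apply, key, LinearMap.mulRight_apply, ← contr_counit_comul (k := k) (x * h),
    WeakBialgebra.comul_mul, comul_of_mem_Hs hh, ← mul_assoc, comul_mul_comul_one]

/-- `Σ x⁽¹⁾ε(hx⁽²⁾) = hx` for `h` in the source base algebra. -/
lemma contr_mulLeft_comul {h : H} (hh : h ∈ Hs k H) :
    contr (ε ∘ₗ LinearMap.mulLeft k h) ∘ₗ Δ = LinearMap.mulLeft k h := by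
  have key : ∀ t : H ⊗[k] H, contr (M := H) (ε ∘ₗ LinearMap.mulLeft k h) t =
      contr (M := H) ε ((1 ⊗ₜ[k] h) * t) := by
    intro t
    induction t with
    | zero => simp
    | tmul a b => simp
    | add a b ha hb => simp only [mul_add, map_add, ha, hb]
  ext x
  rw [LinearMap.comp_apply, key, LinearMap.mulLeft_apply, ← contr_counit_comul (k := k) (h * x),
    WeakBialgebra.comul_mul, comul_of_mem_Hs' hh, mul_assoc, comul_one_mul_comul]

/-- The first leg of `Δ(1)` lies in the source base algebra:
`Σ ε_s(1⁽¹⁾) ⊗ 1⁽²⁾ = Δ(1)`. -/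
lemma rTensor_εs_comul_one : LinearMap.rTensor H (εs k H) (Δ 1) = Δ 1 := by
  have key : ∀ s t : H ⊗[k] H,
      LinearMap.rTensor H (contr ε)
        (((TensorProduct.assoc k H H H).symm ((1 : H) ⊗ₜ[k] t)) * (s ⊗ₜ[k] (1 : H))) =
      LinearMap.rTensor H ((TensorProduct.rid k H).toLinearMap ∘ₗ LinearMap.lTensor H ε ∘ₗ
        LinearMap.mulRight k s ∘ₗ TensorProduct.mk k H H 1) t := by
    intro s t
    induction t with
    | zero => simp
    | tmul a b =>
      induction s with
      | zero => simp
      | tmul c d => simp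
      | add c d hc hd =>
        simp only [mul_add, TensorProduct.add_tmul, map_add, hc, hd, LinearMap.rTensor_tmul,
          LinearMap.comp_apply, LinearMap.mulRight_apply]
    | add a b ha hb => simp only [add_mul, TensorProduct.tmul_add, map_add, ha, hb]
  have collapse : ∀ t : H ⊗[k] H, LinearMap.rTensor H (contr ε)
      (TensorProduct.map Δ (LinearMap.id (M := H)) t) = t := by
    intro t
    induction t with
    | zero => simp
    | tmul a b => simp [contr_counit_comul]
    | add a b ha hb => simp only [map_add, ha, hb]
  refine (key (Δ 1) (Δ 1)).symm.trans ?_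
  rw [← WeakBialgebra.comul_comul_one', collapse]

/-- `Σ ε(x⁽¹⁾ε_s(x⁽²⁾)) = ε(x)`. -/
lemma counit_mul_εs_comul :
    ε ∘ₗ LinearMap.mul' k H ∘ₗ LinearMap.lTensor H (εs k H) ∘ₗ Δ = ε := by
  have key : ∀ t : H ⊗[k] H, ε (LinearMap.mul' k H (LinearMap.lTensor H (εs k H) t)) =
      ε (contr (M := H) ε (t * Δ 1)) := by
    intro t
    induction t with
    | zero => simp
    | tmul a b =>
      simp only [LinearMap.lTensor_tmul, LinearMap.mul'_apply, εs_apply]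
      generalize Δ 1 = s
      induction s with
      | zero => simp
      | tmul c d => simp
      | add c d hc hd => simp only [mul_add, map_add, hc, hd]
    | add a b ha hb => simp only [add_mul, map_add, ha, hb]
  ext x
  simp only [LinearMap.comp_apply]
  rw [key, comul_mul_comul_one, contr_counit_comul]

end SourceBase

/-! ### Contractions of the coaction -/

section Comodule

variable {k H : Type*} [Field k] [Ring H] [Algebra k H] [WeakBialgebra k H]
variable {V : Type*} [AddCommGroup V] [Module k V]

local notation "Δ" => Coalgebra.comul (R := k) (A := H)
local notation "ε" => Coalgebra.counit (R := k) (A := H)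

lemma mulRight_add_eq {A : Type*} [Ring A] [Algebra k A] (a b : A) :
    LinearMap.mulRight k (a + b) = LinearMap.mulRight k a + LinearMap.mulRight k b :=
  LinearMap.ext fun x => mul_add x a b

lemma mulLeft_add_eq {A : Type*} [Ring A] [Algebra k A] (a b : A) :
    LinearMap.mulLeft k (a + b) = LinearMap.mulLeft k a + LinearMap.mulLeft k b :=
  LinearMap.ext fun x => add_mul a b x

/-- By coassociativity, applying the coaction to `Σ v_V·f(v_H)` gives `Σ v_V ⊗ v_H⁽¹⁾·f(v_H⁽²⁾)`. -/
lemma coaction_contr {βV : V →ₗ[k] V ⊗[k] H}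
    (hV2 : ∀ v : V, (TensorProduct.assoc k V H H) ((LinearMap.rTensor H βV) (βV v)) =
      (LinearMap.lTensor V Δ) (βV v)) (f : H →ₗ[k] k) (v : V) :
    βV (contr f (βV v)) = LinearMap.lTensor V (contr f ∘ₗ Δ) (βV v) := by
  have key : ∀ t : V ⊗[k] H, βV (contr f t) =
      LinearMap.lTensor V (contr f) (TensorProduct.assoc k V H H (LinearMap.rTensor H βV t)) := by
    intro t
    induction t with
    | zero => simp
    | tmul w x =>
      simp only [contr_tmul, LinearMap.rTensor_tmul, map_smul]
      generalize βV w = s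
      induction s with
      | zero => simp
      | tmul a b => simp
      | add a b ha hb => simp only [map_add, TensorProduct.add_tmul, smul_add, ha, hb]
    | add a b ha hb => simp only [map_add, ha, hb]
  rw [key, hV2, LinearMap.lTensor_comp_apply]

/-! ### The right unit constraint -/

lemma rhoAmb_tmul (βV : V →ₗ[k] V ⊗[k] H) (v : V) (h : H) :
    rhoAmb k βV (v ⊗ₜ[k] h) = contr (ε ∘ₗ LinearMap.mulRight k h) (βV v) := by
  simp only [rhoAmb, LinearMap.comp_apply, LinearMap.rTensor_tmul, LinearEquiv.coe_coe]
  generalize βV v = t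
  induction t with
  | zero => simp
  | tmul a b => simp
  | add a b ha hb => simp only [map_add, TensorProduct.add_tmul, ha, hb]

/-- `β_V(ρ_V(v ⊗ h)) = Σ v_V ⊗ v_H h`. -/
lemma coaction_rhoAmb {βV : V →ₗ[k] V ⊗[k] H}
    (hV2 : ∀ v : V, (TensorProduct.assoc k V H H) ((LinearMap.rTensor H βV) (βV v)) =
      (LinearMap.lTensor V Δ) (βV v)) (v : V) {h : H} (hh : h ∈ Hs k H) :
    βV (rhoAmb k βV (v ⊗ₜ[k] h)) = LinearMap.lTensor V (LinearMap.mulRight k h) (βV v) := by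
  rw [rhoAmb_tmul, coaction_contr hV2, contr_mulRight_comul hh]

/-- By coassociativity and counitality this reduces to `Σ ε(x⁽¹⁾ε_s(x⁽²⁾)) = ε(x)`. -/
lemma rhoAmb_rhoInvAmb {βV : V →ₗ[k] V ⊗[k] H}
    (hV1 : ∀ v : V, TensorProduct.rid k V ((LinearMap.lTensor V ε) (βV v)) = v)
    (hV2 : ∀ v : V, (TensorProduct.assoc k V H H) ((LinearMap.rTensor H βV) (βV v)) =
      (LinearMap.lTensor V Δ) (βV v)) (v : V) :
    rhoAmb k βV (rhoInvAmb k βV v) = v := by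
  have key : ∀ t : (V ⊗[k] H) ⊗[k] H,
      TensorProduct.assoc k V H H (LinearMap.lTensor (V ⊗[k] H) (εs k H) t) =
        LinearMap.lTensor V (LinearMap.lTensor H (εs k H)) (TensorProduct.assoc k V H H t) := by
    intro t
    induction t with
    | zero => simp
    | tmul a b =>
      induction a with
      | zero => simp
      | tmul c d => simp
      | add c d hc hd => simp only [map_add, TensorProduct.add_tmul, hc, hd]
    | add a b ha hb => simp only [map_add, ha, hb]
  simp only [rhoAmb, rhoInvAmb, LinearMap.comp_apply, LinearEquiv.coe_coe]
  rw [← LinearMap.comp_apply (LinearMap.rTensor H βV), LinearMap.rTensor_comp_lTensor,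
    ← LinearMap.lTensor_comp_rTensor, LinearMap.comp_apply, key, hV2,
    ← LinearMap.lTensor_comp_apply, ← LinearMap.lTensor_comp_apply]
  have h := counit_mul_εs_comul (k := k) (H := H)
  simp only [LinearMap.comp_assoc] at h ⊢
  rw [h, hV1]

/-- Inside `V ⊗ H`, the truncation idempotent on `V ⊗ H_s` is `ρ_V⁻¹ ∘ ρ_V`: both send `v ⊗ h`
to `Σ v_V ⊗ ε_s(v_H h)`. -/
lemma subtype_Ptrunc_right {βV : V →ₗ[k] V ⊗[k] H}
    (hV2 : ∀ v : V, (TensorProduct.assoc k V H H) ((LinearMap.rTensor H βV) (βV v)) =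
      (LinearMap.lTensor V Δ) (βV v))
    {βs : ↥(Hs k H) →ₗ[k] ↥(Hs k H) ⊗[k] H}
    (hβs : ∀ x : ↥(Hs k H), (LinearMap.rTensor H (Hs k H).subtype) (βs x) = Δ (x : H))
    (z : V ⊗[k] ↥(Hs k H)) :
    LinearMap.lTensor V (Hs k H).subtype (Ptrunc k βV βs z) =
      rhoInvAmb k βV (rhoAmb k βV (LinearMap.lTensor V (Hs k H).subtype z)) := by
  induction z with
  | zero => simp
  | add a b ha hb => simp only [map_add, ha, hb]
  | tmul v h =>
    -- the ambient form of the truncation, with `Δ(h)` in place of `βs h`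
    have amb : ∀ (t : V ⊗[k] H) (s : ↥(Hs k H) ⊗[k] H),
        LinearMap.lTensor V (Hs k H).subtype (contr (ε ∘ₗ LinearMap.mul' k H)
          (TensorProduct.tensorTensorTensorComm k V H (Hs k H) H (t ⊗ₜ[k] s))) =
        contr (ε ∘ₗ LinearMap.mul' k H) (TensorProduct.tensorTensorTensorComm k V H H H
          (t ⊗ₜ[k] LinearMap.rTensor H (Hs k H).subtype s)) := by
      intro t s
      induction t with
      | zero => simp
      | add a b ha hb => simp only [map_add, TensorProduct.add_tmul, ha, hb]
      | tmul a b =>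
        induction s with
        | zero => simp
        | add c d hc hd => simp only [map_add, TensorProduct.tmul_add, hc, hd]
        | tmul c d => simp
    have key : ∀ (t : V ⊗[k] H), contr (ε ∘ₗ LinearMap.mul' k H)
        (TensorProduct.tensorTensorTensorComm k V H H H
          (t ⊗ₜ[k] (((1 : H) ⊗ₜ[k] (h : H)) * Δ 1))) =
        LinearMap.lTensor V (εs k H) (LinearMap.lTensor V (LinearMap.mulRight k (h : H)) t) := by
      intro t
      induction t with
      | zero => simp
      | add a b ha hb => simp only [map_add, TensorProduct.add_tmul, ha, hb]
      | tmul a b =>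
        simp only [LinearMap.lTensor_tmul, εs_apply, LinearMap.mulRight_apply]
        generalize Δ 1 = s
        induction s with
        | zero => simp
        | add c d hc hd => simp only [map_add, mul_add, TensorProduct.tmul_add, hc, hd]
        | tmul c d => simp
    rw [LinearMap.lTensor_tmul, rhoInvAmb, LinearMap.comp_apply, Submodule.subtype_apply,
      coaction_rhoAmb hV2 v h.2, ← key, ← comul_of_mem_Hs' h.2, ← hβs, ← amb]
    rfl

/-- `ρ_V` commutes with the coactions: both sides send `v ⊗ h` to `Σ v_V ⊗ v_H h`. -/
lemma coaction_rho {βV : V →ₗ[k] V ⊗[k] H}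
    (hV2 : ∀ v : V, (TensorProduct.assoc k V H H) ((LinearMap.rTensor H βV) (βV v)) =
      (LinearMap.lTensor V Δ) (βV v))
    {βs : ↥(Hs k H) →ₗ[k] ↥(Hs k H) ⊗[k] H}
    (hβs : ∀ x : ↥(Hs k H), (LinearMap.rTensor H (Hs k H).subtype) (βs x) = Δ (x : H))
    (z : V ⊗[k] ↥(Hs k H)) :
    βV (rhoAmb k βV (LinearMap.lTensor V (Hs k H).subtype z)) =
      LinearMap.rTensor H (rhoAmb k βV ∘ₗ LinearMap.lTensor V (Hs k H).subtype)
        (coactTrunc k βV βs z) := by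
  induction z with
  | zero => simp
  | add a b ha hb => simp only [map_add, ha, hb]
  | tmul v h =>
    -- applying `ρ_V` to the first two legs of the coaction, for general legs `t`, `s`
    have key : ∀ (t : V ⊗[k] H) (s : ↥(Hs k H) ⊗[k] H),
        LinearMap.rTensor H (rhoAmb k βV ∘ₗ LinearMap.lTensor V (Hs k H).subtype)
          (LinearMap.lTensor (V ⊗[k] ↥(Hs k H)) (LinearMap.mul' k H)
            (TensorProduct.tensorTensorTensorComm k V H (Hs k H) H (t ⊗ₜ[k] s))) =
        LinearMap.lTensor V ((TensorProduct.lid k H).toLinearMap ∘ₗ LinearMap.rTensor H ε ∘ₗ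
            LinearMap.mulRight k (LinearMap.rTensor H (Hs k H).subtype s))
          (TensorProduct.assoc k V H H (LinearMap.rTensor H βV t)) := by
      intro t s
      induction s with
      | zero => simp
      | add c d hc hd =>
        rw [TensorProduct.tmul_add, map_add, map_add, map_add, hc, hd, map_add, mulRight_add_eq]
        simp only [LinearMap.comp_add, LinearMap.lTensor_add, LinearMap.add_apply]
      | tmul c d =>
        induction t with
        | zero => simp
        | add a b ha hb => simp only [map_add, TensorProduct.add_tmul, ha, hb]
        | tmul a b =>
          simp only [TensorProduct.tensorTensorTensorComm_tmul, LinearMap.lTensor_tmul,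
            LinearMap.rTensor_tmul, LinearMap.comp_apply, rhoAmb_tmul]
          generalize βV a = r
          induction r with
          | zero => simp
          | add a b ha hb => simp only [map_add, TensorProduct.add_tmul, ha, hb]
          | tmul e f => simp [TensorProduct.smul_tmul]
    have collapse : ((TensorProduct.lid k H).toLinearMap ∘ₗ LinearMap.rTensor H ε ∘ₗ
        LinearMap.mulRight k (Δ (h : H))) ∘ₗ Δ = LinearMap.mulRight k (h : H) := by
      ext x
      simp [← WeakBialgebra.comul_mul]
    refine Eq.trans ?_ (key (βV v) (βs h)).symm
    rw [hβs, hV2, ← LinearMap.lTensor_comp_apply, collapse, LinearMap.lTensor_tmul,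
      Submodule.subtype_apply, coaction_rhoAmb hV2 v h.2]

lemma exists_lTensor_subtype_eq_rhoInvAmb (βV : V →ₗ[k] V ⊗[k] H) (v : V) :
    ∃ y : V ⊗[k] ↥(Hs k H), LinearMap.lTensor V (Hs k H).subtype y = rhoInvAmb k βV v := by
  let r : H →ₗ[k] ↥(Hs k H) := (εs k H).rangeRestrict
  refine ⟨LinearMap.lTensor V r (βV v), ?_⟩
  rw [← LinearMap.lTensor_comp_apply]
  rfl

/-! ### The left unit constraint -/

lemma lamAmb_tmul (βV : V →ₗ[k] V ⊗[k] H) (h : H) (v : V) :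
    lamAmb k βV (h ⊗ₜ[k] v) = contr (ε ∘ₗ LinearMap.mulLeft k h) (βV v) := by
  simp only [lamAmb, LinearMap.comp_apply, LinearMap.lTensor_tmul, LinearEquiv.coe_coe]
  generalize βV v = t
  induction t with
  | zero => simp
  | tmul a b => simp
  | add a b ha hb => simp only [map_add, TensorProduct.tmul_add, ha, hb]

lemma lamInvAmb_apply (βV : V →ₗ[k] V ⊗[k] H) (v : V) :
    lamInvAmb k βV v = contr (ε ∘ₗ LinearMap.mul' k H)
      (TensorProduct.tensorTensorTensorComm k H H V H (Δ 1 ⊗ₜ[k] βV v)) := rfl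

/-- `β_V(λ_V(h ⊗ v)) = Σ v_V ⊗ h v_H`. -/
lemma coaction_lamAmb {βV : V →ₗ[k] V ⊗[k] H}
    (hV2 : ∀ v : V, (TensorProduct.assoc k V H H) ((LinearMap.rTensor H βV) (βV v)) =
      (LinearMap.lTensor V Δ) (βV v)) (v : V) {h : H} (hh : h ∈ Hs k H) :
    βV (lamAmb k βV (h ⊗ₜ[k] v)) = LinearMap.lTensor V (LinearMap.mulLeft k h) (βV v) := by
  rw [lamAmb_tmul, coaction_contr hV2, contr_mulLeft_comul hh]

/-- By coassociativity and counitality this reduces to `Σ ε(1⁽¹⁾x⁽¹⁾)ε(1⁽²⁾x⁽²⁾) = ε(x)`. -/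
lemma lamAmb_lamInvAmb {βV : V →ₗ[k] V ⊗[k] H}
    (hV1 : ∀ v : V, TensorProduct.rid k V ((LinearMap.lTensor V ε) (βV v)) = v)
    (hV2 : ∀ v : V, (TensorProduct.assoc k V H H) ((LinearMap.rTensor H βV) (βV v)) =
      (LinearMap.lTensor V Δ) (βV v)) (v : V) :
    lamAmb k βV (lamInvAmb k βV v) = v := by
  have key : ∀ (s : H ⊗[k] H) (t : V ⊗[k] H),
      lamAmb k βV (contr (ε ∘ₗ LinearMap.mul' k H)
        (TensorProduct.tensorTensorTensorComm k H H V H (s ⊗ₜ[k] t))) =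
      contr (M := V) (ε ∘ₗ contr ε ∘ₗ LinearMap.mulLeft k s)
        (TensorProduct.assoc k V H H (LinearMap.rTensor H βV t)) := by
    intro s t
    induction s with
    | zero => simp [contr]
    | add c d hc hd =>
      rw [TensorProduct.add_tmul, map_add, map_add, map_add, hc, hd, mulLeft_add_eq]
      simp only [contr, LinearMap.comp_add, LinearMap.lTensor_add, LinearMap.add_apply]
    | tmul c d =>
      induction t with
      | zero => simp
      | add a b ha hb => simp only [map_add, TensorProduct.tmul_add, ha, hb]
      | tmul a b =>
        simp only [TensorProduct.tensorTensorTensorComm_tmul, contr_tmul, map_smul,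
          LinearMap.rTensor_tmul, lamAmb_tmul]
        generalize βV a = r
        induction r with
        | zero => simp
        | add a b ha hb => simp only [map_add, smul_add, TensorProduct.add_tmul, ha, hb]
        | tmul e f => simp [smul_smul]
  have collapse : (ε ∘ₗ contr ε ∘ₗ LinearMap.mulLeft k (Δ 1)) ∘ₗ Δ = ε := by
    ext x
    simp only [LinearMap.comp_apply, LinearMap.mulLeft_apply]
    rw [comul_one_mul_comul, contr_counit_comul]
  rw [lamInvAmb_apply, key, hV2, contr, LinearMap.comp_apply, ← LinearMap.lTensor_comp_apply,
    collapse]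
  exact hV1 v

/-- Truncating in `H_s ⊗ V` and then including into `H ⊗ V` agrees with including first. -/
lemma subtype_contr_left (s : ↥(Hs k H) ⊗[k] H) (t : V ⊗[k] H) :
    LinearMap.rTensor V (Hs k H).subtype (contr (ε ∘ₗ LinearMap.mul' k H)
      (TensorProduct.tensorTensorTensorComm k (Hs k H) H V H (s ⊗ₜ[k] t))) =
    contr (ε ∘ₗ LinearMap.mul' k H) (TensorProduct.tensorTensorTensorComm k H H V H
      (LinearMap.rTensor H (Hs k H).subtype s ⊗ₜ[k] t)) := by
  induction t with
  | zero => simp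
  | add a b ha hb => simp only [map_add, TensorProduct.tmul_add, ha, hb]
  | tmul a b =>
    induction s with
    | zero => simp
    | add c d hc hd => simp only [map_add, TensorProduct.add_tmul, hc, hd]
    | tmul c d => simp

/-- Inside `H ⊗ V`, the truncation idempotent on `H_s ⊗ V` is `λ_V⁻¹ ∘ λ_V`: both send `h ⊗ v`
to `Σ (1⁽¹⁾ ⊗ v_V)·ε(1⁽²⁾ h v_H)`. -/
lemma subtype_Ptrunc_left {βV : V →ₗ[k] V ⊗[k] H}
    (hV2 : ∀ v : V, (TensorProduct.assoc k V H H) ((LinearMap.rTensor H βV) (βV v)) =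
      (LinearMap.lTensor V Δ) (βV v))
    {βs : ↥(Hs k H) →ₗ[k] ↥(Hs k H) ⊗[k] H}
    (hβs : ∀ x : ↥(Hs k H), (LinearMap.rTensor H (Hs k H).subtype) (βs x) = Δ (x : H))
    (z : ↥(Hs k H) ⊗[k] V) :
    LinearMap.rTensor V (Hs k H).subtype (Ptrunc k βs βV z) =
      lamInvAmb k βV (lamAmb k βV (LinearMap.rTensor V (Hs k H).subtype z)) := by
  induction z with
  | zero => simp
  | add a b ha hb => simp only [map_add, ha, hb]
  | tmul h v =>
    have key : ∀ (s : H ⊗[k] H) (t : V ⊗[k] H), contr (ε ∘ₗ LinearMap.mul' k H)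
        (TensorProduct.tensorTensorTensorComm k H H V H
          ((s * ((1 : H) ⊗ₜ[k] (h : H))) ⊗ₜ[k] t)) =
        contr (ε ∘ₗ LinearMap.mul' k H) (TensorProduct.tensorTensorTensorComm k H H V H
          (s ⊗ₜ[k] LinearMap.lTensor V (LinearMap.mulLeft k (h : H)) t)) := by
      intro s t
      induction t with
      | zero => simp
      | add a b ha hb => simp only [map_add, TensorProduct.tmul_add, ha, hb]
      | tmul a b =>
        induction s with
        | zero => simp
        | add c d hc hd => simp only [map_add, add_mul, TensorProduct.add_tmul, hc, hd]
        | tmul c d => simp [mul_assoc]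
    rw [LinearMap.rTensor_tmul, lamInvAmb_apply, Submodule.subtype_apply,
      coaction_lamAmb hV2 v h.2, ← key, ← comul_of_mem_Hs h.2, ← hβs, ← subtype_contr_left]
    rfl

/-- `λ_V` commutes with the coactions: both sides send `h ⊗ v` to `Σ v_V ⊗ h v_H`. -/
lemma coaction_lam {βV : V →ₗ[k] V ⊗[k] H}
    (hV2 : ∀ v : V, (TensorProduct.assoc k V H H) ((LinearMap.rTensor H βV) (βV v)) =
      (LinearMap.lTensor V Δ) (βV v))
    {βs : ↥(Hs k H) →ₗ[k] ↥(Hs k H) ⊗[k] H}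
    (hβs : ∀ x : ↥(Hs k H), (LinearMap.rTensor H (Hs k H).subtype) (βs x) = Δ (x : H))
    (z : ↥(Hs k H) ⊗[k] V) :
    βV (lamAmb k βV (LinearMap.rTensor V (Hs k H).subtype z)) =
      LinearMap.rTensor H (lamAmb k βV ∘ₗ LinearMap.rTensor V (Hs k H).subtype)
        (coactTrunc k βs βV z) := by
  induction z with
  | zero => simp
  | add a b ha hb => simp only [map_add, ha, hb]
  | tmul h v =>
    -- applying `λ_V` to the first two legs of the coaction, for general legs `s`, `t`
    have key : ∀ (s : ↥(Hs k H) ⊗[k] H) (t : V ⊗[k] H),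
        LinearMap.rTensor H (lamAmb k βV ∘ₗ LinearMap.rTensor V (Hs k H).subtype)
          (LinearMap.lTensor (↥(Hs k H) ⊗[k] V) (LinearMap.mul' k H)
            (TensorProduct.tensorTensorTensorComm k (Hs k H) H V H (s ⊗ₜ[k] t))) =
        LinearMap.lTensor V ((TensorProduct.lid k H).toLinearMap ∘ₗ LinearMap.rTensor H ε ∘ₗ
            LinearMap.mulLeft k (LinearMap.rTensor H (Hs k H).subtype s))
          (TensorProduct.assoc k V H H (LinearMap.rTensor H βV t)) := by
      intro s t
      induction s with
      | zero => simp
      | add c d hc hd =>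
        rw [TensorProduct.add_tmul, map_add, map_add, map_add, hc, hd, map_add, mulLeft_add_eq]
        simp only [LinearMap.comp_add, LinearMap.lTensor_add, LinearMap.add_apply]
      | tmul c d =>
        induction t with
        | zero => simp
        | add a b ha hb => simp only [map_add, TensorProduct.tmul_add, ha, hb]
        | tmul a b =>
          simp only [TensorProduct.tensorTensorTensorComm_tmul, LinearMap.lTensor_tmul,
            LinearMap.rTensor_tmul, LinearMap.comp_apply, lamAmb_tmul]
          generalize βV a = r
          induction r with
          | zero => simp
          | add a b ha hb => simp only [map_add, TensorProduct.add_tmul, ha, hb]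
          | tmul e f => simp [TensorProduct.smul_tmul]
    have collapse : ((TensorProduct.lid k H).toLinearMap ∘ₗ LinearMap.rTensor H ε ∘ₗ
        LinearMap.mulLeft k (Δ (h : H))) ∘ₗ Δ = LinearMap.mulLeft k (h : H) := by
      ext x
      simp [← WeakBialgebra.comul_mul]
    refine Eq.trans ?_ (key (βs h) (βV v)).symm
    rw [hβs, hV2, ← LinearMap.lTensor_comp_apply, collapse, LinearMap.rTensor_tmul,
      Submodule.subtype_apply, coaction_lamAmb hV2 v h.2]

/-- `λ_V⁻¹` takes values in `H_s ⊗ V`, because the first leg of `Δ(1)` lies in `H_s`. -/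
lemma exists_rTensor_subtype_eq_lamInvAmb (βV : V →ₗ[k] V ⊗[k] H) (v : V) :
    ∃ y : ↥(Hs k H) ⊗[k] V, LinearMap.rTensor V (Hs k H).subtype y = lamInvAmb k βV v := by
  let r : H →ₗ[k] ↥(Hs k H) := (εs k H).rangeRestrict
  have hr : (Hs k H).subtype ∘ₗ r = εs k H := rfl
  refine ⟨_, (subtype_contr_left (LinearMap.rTensor H r (Δ 1)) (βV v)).trans ?_⟩
  rw [← LinearMap.rTensor_comp_apply, hr, rTensor_εs_comul_one, lamInvAmb_apply]

end Comodule

/-! ### Inverses on the image of an idempotent -/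

/-- If `f ∘ g = id`, if `g` takes values in the image of `i`, and if `P` becomes `g ∘ f` under `i`,
then `f` and `g` are mutually inverse between the image of `P` (seen through `i`) and the target
of `f`. -/
lemma inverse_on_range {R A B C : Type*} [Field R] [AddCommGroup A] [Module R A]
    [AddCommGroup B] [Module R B] [AddCommGroup C] [Module R C]
    (i : A →ₗ[R] B) (P : A →ₗ[R] A) (f : B →ₗ[R] C) (g : C →ₗ[R] B)
    (hfg : ∀ c, f (g c) = c) (hP : ∀ a, i (P a) = g (f (i a))) (hg : ∀ c, ∃ a, i a = g c) :
    (∀ c, ∃ z : ↥(LinearMap.range P), i ((LinearMap.range P).subtype z) = g c ∧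
      f (i ((LinearMap.range P).subtype z)) = c) ∧
    ∀ z : ↥(LinearMap.range P), g (f (i ((LinearMap.range P).subtype z))) =
      i ((LinearMap.range P).subtype z) := by
  constructor
  · intro c
    obtain ⟨a, ha⟩ := hg c
    have h : i (P a) = g c := by rw [hP, ha, hfg]
    exact ⟨⟨P a, a, rfl⟩, h, (congrArg f h).trans (hfg c)⟩
  · rintro ⟨_, a, rfl⟩
    simp only [Submodule.subtype_apply, hP, hfg]

/-- For a right comodule `(V, βV)` of a weak bialgebra over a field,
the unit constraints `λ_V : H_s⊗̂V → V`, `h⊗v ↦ Σ v_V·ε(h·v_H)`, and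
`ρ_V : V⊗̂H_s → V`, `v⊗h ↦ Σ v_V·ε(v_H·h)`, are isomorphisms of right `H`-comodules,
with inverses `λ_V⁻¹(v) = Σ (1⁽¹⁾⊗v_V)·ε(1⁽²⁾·v_H)` and `ρ_V⁻¹(v) = Σ v_V ⊗ ε_s(v_H)`.
Here `H_s` carries the coaction `βs` obtained by restricting `Δ`, and the maps and
their inverses are expressed through the ambient inclusions of the truncated tensor
products. -/
theorem unit_constraints_comodule_isomorphisms [WeakBialgebra k H]
    {V : Type*} [AddCommGroup V] [Module k V]
    (βV : V →ₗ[k] V ⊗[k] H)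
    (hV1 : ∀ v : V,
      TensorProduct.rid k V
        ((LinearMap.lTensor V (Coalgebra.counit (R := k) (A := H))) (βV v)) = v)
    (hV2 : ∀ v : V,
      (TensorProduct.assoc k V H H) ((LinearMap.rTensor H βV) (βV v)) =
        (LinearMap.lTensor V (Coalgebra.comul (R := k) (A := H))) (βV v))
    (βs : ↥(Hs k H) →ₗ[k] ↥(Hs k H) ⊗[k] H)
    (hβs : ∀ x : ↥(Hs k H),
      (LinearMap.rTensor H (Hs k H).subtype) (βs x) = Coalgebra.comul (R := k) (x : H)) :
    -- `λ_V` is a morphism of right `H`-comodules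
    (∀ z : ↥(LinearMap.range (Ptrunc k βs βV)),
      βV ((lamAmb k βV) ((LinearMap.rTensor V (Hs k H).subtype)
          ((LinearMap.range (Ptrunc k βs βV)).subtype z))) =
        (LinearMap.rTensor H ((lamAmb k βV) ∘ₗ (LinearMap.rTensor V (Hs k H).subtype)))
          ((coactTrunc k βs βV) ((LinearMap.range (Ptrunc k βs βV)).subtype z))) ∧
    -- `λ_V` is bijective, with inverse given by `λ_V⁻¹`
    (∀ v : V, ∃ z : ↥(LinearMap.range (Ptrunc k βs βV)),
      (LinearMap.rTensor V (Hs k H).subtype)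
          ((LinearMap.range (Ptrunc k βs βV)).subtype z) = lamInvAmb k βV v ∧
      (lamAmb k βV) ((LinearMap.rTensor V (Hs k H).subtype)
          ((LinearMap.range (Ptrunc k βs βV)).subtype z)) = v) ∧
    (∀ z : ↥(LinearMap.range (Ptrunc k βs βV)),
      lamInvAmb k βV ((lamAmb k βV) ((LinearMap.rTensor V (Hs k H).subtype)
          ((LinearMap.range (Ptrunc k βs βV)).subtype z))) =
        (LinearMap.rTensor V (Hs k H).subtype)
          ((LinearMap.range (Ptrunc k βs βV)).subtype z)) ∧
    -- `ρ_V` is a morphism of right `H`-comodules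
    (∀ z : ↥(LinearMap.range (Ptrunc k βV βs)),
      βV ((rhoAmb k βV) ((LinearMap.lTensor V (Hs k H).subtype)
          ((LinearMap.range (Ptrunc k βV βs)).subtype z))) =
        (LinearMap.rTensor H ((rhoAmb k βV) ∘ₗ (LinearMap.lTensor V (Hs k H).subtype)))
          ((coactTrunc k βV βs) ((LinearMap.range (Ptrunc k βV βs)).subtype z))) ∧
    -- `ρ_V` is bijective, with inverse given by `ρ_V⁻¹`
    (∀ v : V, ∃ z : ↥(LinearMap.range (Ptrunc k βV βs)),
      (LinearMap.lTensor V (Hs k H).subtype)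
          ((LinearMap.range (Ptrunc k βV βs)).subtype z) = rhoInvAmb k βV v ∧
      (rhoAmb k βV) ((LinearMap.lTensor V (Hs k H).subtype)
          ((LinearMap.range (Ptrunc k βV βs)).subtype z)) = v) ∧
    (∀ z : ↥(LinearMap.range (Ptrunc k βV βs)),
      rhoInvAmb k βV ((rhoAmb k βV) ((LinearMap.lTensor V (Hs k H).subtype)
          ((LinearMap.range (Ptrunc k βV βs)).subtype z))) =
        (LinearMap.lTensor V (Hs k H).subtype)
          ((LinearMap.range (Ptrunc k βV βs)).subtype z)) := by
  have right := inverse_on_range (LinearMap.lTensor V (Hs k H).subtype) (Ptrunc k βV βs)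
    (rhoAmb k βV) (rhoInvAmb k βV) (rhoAmb_rhoInvAmb hV1 hV2) (subtype_Ptrunc_right hV2 hβs)
    (exists_lTensor_subtype_eq_rhoInvAmb βV)
  have left := inverse_on_range (LinearMap.rTensor V (Hs k H).subtype) (Ptrunc k βs βV)
    (lamAmb k βV) (lamInvAmb k βV) (lamAmb_lamInvAmb hV1 hV2) (subtype_Ptrunc_left hV2 hβs)
    (exists_rTensor_subtype_eq_lamInvAmb βV)
  exact ⟨fun z => coaction_lam hV2 hβs _, left.1, left.2,
    fun z => coaction_rho hV2 hβs _, right.1, right.2⟩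
end

section
/- Let H be a weak bialgebra over a field k such that H_t ∩ H_s = k·1 (the intersection of the base algebras is the line spanned by the unit). Regard H_s as a right H-comodule via the restriction of Δ. Then every endomorphism f of the right H-comodule H_s is a scalar multiple of the identity: f = c·id_{H_s}, where c ∈ k is determined by f(1) = c·1. -/
/-!
A comodule endomorphism `f` of `H_s` is controlled by its value at `1`. Write `Δ(1) = 1₁ ⊗ 1₂`,
with left legs in `H_s`. Colinearity at `1` says `f(1₁) ⊗ 1₂ = Δ(f(1))`; applying `ε` to the left
leg gives `f(1) = ε(f(1₁)) 1₂`, a contraction of the left leg of `Δ(1)`. Every such contraction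
lies in `H_t` (`contract_comul_one_mem_Ht`, a consequence of (WBA3)), so
`f(1) ∈ H_t ∩ H_s = k·1`, say `f(1) = c·1`. Then `f(1₁) ⊗ 1₂ = c (1₁ ⊗ 1₂)`, and since every
element of `H_s` has the form `ε_s(y) = 1₁ ε(y 1₂)`, contracting the right leg with `ε(y ·)`
gives `f(ε_s(y)) = c ε_s(y)`.
-/

open scoped TensorProduct
open TensorProduct LinearMap

variable (k H : Type*) [Field k] [Ring H] [Algebra k H]

open Coalgebra in
/-- For any functional `φ`, the element `φ(1₁) 1₂` is fixed by `ε_t`: indeed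
`φ(1₁) ε(1'₁ 1₂) 1'₂ = (φ ⊗ ε ⊗ id)((Δ ⊗ id)Δ(1)) = φ(1₁) 1₂` by (WBA3). -/
theorem contract_comul_one_mem_Ht [WeakBialgebra k H] (φ : H →ₗ[k] k) :
    TensorProduct.lid k H (rTensor H φ (comul (R := k) (1 : H))) ∈ Ht k H := by
  let Φ : (H ⊗[k] H) ⊗[k] H →ₗ[k] H := (TensorProduct.lid k H).toLinearMap ∘ₗ
    rTensor H ((TensorProduct.lid k k).toLinearMap ∘ₗ TensorProduct.map φ (counit (R := k)))
  have h₁ : ∀ s : H ⊗[k] H, Φ (TensorProduct.map (comul (R := k)) (LinearMap.id (M := H)) s) =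
      TensorProduct.lid k H (rTensor H φ s) := by
    intro s
    induction s with
    | zero => simp
    | add a b ha hb => simp only [map_add, ha, hb]
    | tmul a b =>
      have hc : TensorProduct.map φ (counit (R := k)) (comul (R := k) a) = φ a ⊗ₜ[k] (1 : k) := by
        have := congrArg (rTensor k φ) (lTensor_counit_comul (R := k) a)
        rwa [← LinearMap.comp_apply, rTensor_comp_lTensor, rTensor_tmul] at this
      simp [Φ, hc]
  have h₂ : ∀ s t : H ⊗[k] H,
      Φ (((TensorProduct.assoc k H H H).symm ((1 : H) ⊗ₜ[k] s)) * (t ⊗ₜ[k] (1 : H))) =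
        TensorProduct.lid k H (rTensor H (counit (R := k))
          (s * ((TensorProduct.lid k H (rTensor H φ t)) ⊗ₜ[k] (1 : H)))) := by
    intro s t
    induction s with
    | zero => simp
    | add a b ha hb => simp only [tmul_add, map_add, add_mul, ha, hb]
    | tmul a b =>
      induction t with
      | zero => simp
      | add c d hc hd => simp only [add_tmul, map_add, mul_add, hc, hd]
      | tmul c d => simp [Φ]
  refine ⟨TensorProduct.lid k H (rTensor H φ (comul (R := k) (1 : H))), ?_⟩
  have h₃ := h₁ (comul (R := k) (1 : H))
  rw [WeakBialgebra.comul_comul_one', h₂] at h₃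
  exact h₃

/-- Let `H` be a weak bialgebra over a field `k` with
`H_t ∩ H_s = k·1`. Then every endomorphism of the right `H`-comodule `H_s`
(with coaction `βs` the restriction of `Δ`) is a scalar multiple of the identity,
the scalar being determined by `f(1) = c·1`. -/
theorem endomorphism_of_sourceBase_scalar [WeakBialgebra k H]
    (hbase : Ht k H ⊓ Hs k H = Submodule.span k {(1 : H)})
    (βs : ↥(Hs k H) →ₗ[k] ↥(Hs k H) ⊗[k] H)
    (hβs : ∀ x : ↥(Hs k H),
      (LinearMap.rTensor H (Hs k H).subtype) (βs x) = Coalgebra.comul (R := k) (x : H))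
    (f : ↥(Hs k H) →ₗ[k] ↥(Hs k H))
    (hf : ∀ x : ↥(Hs k H), (LinearMap.rTensor H f) (βs x) = βs (f x)) :
    ∃ c : k, (∀ x : ↥(Hs k H), f x = c • x) ∧
      ∀ h1 : (1 : H) ∈ Hs k H, ((f ⟨1, h1⟩ : ↥(Hs k H)) : H) = c • (1 : H) := by
  have h1 : (1 : H) ∈ Hs k H :=
    (hbase ▸ Submodule.mem_span_singleton_self (1 : H) : (1 : H) ∈ Ht k H ⊓ Hs k H).2
  have hu : ((f ⟨1, h1⟩ : Hs k H) : H) ∈ Ht k H := by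
    -- `ε ∘ f` is only defined on `H_s`; extend it to `H` to contract the left leg of `Δ(1)`.
    obtain ⟨φ, hφ⟩ := LinearMap.exists_extend
      (Coalgebra.counit (R := k) (A := H) ∘ₗ (Hs k H).subtype ∘ₗ f)
    have key : TensorProduct.lid k H (rTensor H φ (Coalgebra.comul (R := k) (1 : H))) =
        ((f ⟨1, h1⟩ : Hs k H) : H) := by
      have e := hβs ⟨1, h1⟩
      have e' := hβs (f ⟨1, h1⟩)
      simp only at e
      rw [← e, ← LinearMap.comp_apply, ← rTensor_comp, hφ, rTensor_comp, rTensor_comp,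
        LinearMap.comp_apply, LinearMap.comp_apply, hf, e', Coalgebra.rTensor_counit_comul]
      simp
    exact key ▸ contract_comul_one_mem_Ht k H φ
  have hmem : ((f ⟨1, h1⟩ : Hs k H) : H) ∈ Submodule.span k {(1 : H)} :=
    hbase ▸ ⟨hu, (f ⟨1, h1⟩).2⟩
  obtain ⟨c, hc⟩ := Submodule.mem_span_singleton.1 hmem
  have hc' : f ⟨1, h1⟩ = c • ⟨1, h1⟩ := Subtype.ext hc.symm
  refine ⟨c, ?_, fun _ => hc.symm⟩
  rintro ⟨_, y, rfl⟩
  -- `g` contracts the right leg with `ε(y ·)`, so that `g (βs 1) = ε_s(y)`.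
  let g : Hs k H ⊗[k] H →ₗ[k] Hs k H := (TensorProduct.rid k (Hs k H)).toLinearMap ∘ₗ
    lTensor (Hs k H) (Coalgebra.counit (R := k) (A := H) ∘ₗ LinearMap.mulLeft k y)
  have hgf : ∀ t, g (rTensor H f t) = f (g t) := by
    intro t
    induction t with
    | zero => simp
    | add a b ha hb => simp only [map_add, ha, hb]
    | tmul a b => simp [g]
  have hgs : ∀ t, ((g t : Hs k H) : H) = TensorProduct.rid k H
      (lTensor H (Coalgebra.counit (R := k) (A := H))
        (((1 : H) ⊗ₜ[k] y) * rTensor H (Hs k H).subtype t)) := by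
    intro t
    induction t with
    | zero => simp
    | add a b ha hb => simp only [map_add, mul_add, Submodule.coe_add, ha, hb]
    | tmul a b => simp [g]
  have hg1 : g (βs ⟨1, h1⟩) = ⟨εs k H y, y, rfl⟩ := by
    apply Subtype.ext
    rw [hgs, hβs]
    rfl
  rw [← hg1, ← hgf, hf, hc', map_smul, map_smul]
end

section
/- Let C be a coassociative counital coalgebra over a field k and let (V, β_V) be an irreducible right C-comodule, i.e. V ≠ 0 and the only subspaces W ⊆ V with β_V(W) ⊆ W⊗C are 0 and V. Then V is finite-dimensional as a k-vector space. -/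
open scoped TensorProduct
open TensorProduct LinearMap

/-!
Fix `v ≠ 0` and let `W = {(id ⊗ f)(β v) : f ∈ C*}`, the space of coefficients of `β v`.
It is finite-dimensional because `β v` is a finite sum of pure tensors, it contains `v` by the
counit axiom, and `β v` lies in `W ⊗ C` (expand it along a basis of `C`). Coassociativity gives
`β ((id ⊗ f)(β v)) = (id ⊗ g)(β v)` with `g = (id ⊗ f) ∘ Δ`, so `β` maps `W` into `W ⊗ C`.
Irreducibility then forces `W = V`.
-/

section

variable {k C V : Type*} [Field k] [AddCommGroup C] [Module k C] [AddCommGroup V] [Module k V]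

/-- The subspace `{(id ⊗ f) x : f ∈ C*}` of `V`, i.e. the smallest `W` with `x ∈ W ⊗ C`.
The set is already a subspace; the span only bundles it as one. -/
def coeffSpace (x : V ⊗[k] C) : Submodule k V :=
  Submodule.span k
    (Set.range fun f : C →ₗ[k] k => TensorProduct.rid k V (LinearMap.lTensor V f x))

lemma coeffSpace_finiteDimensional (x : V ⊗[k] C) : FiniteDimensional k (coeffSpace x) := by
  suffices h : ∃ P : Submodule k V, FiniteDimensional k P ∧ coeffSpace x ≤ P by
    obtain ⟨P, hP, hle⟩ := h
    exact Submodule.finiteDimensional_of_le hle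
  induction x using TensorProduct.induction_on with
  | zero =>
    refine ⟨⊥, inferInstance, Submodule.span_le.2 ?_⟩
    rintro _ ⟨f, rfl⟩
    simp
  | tmul w c =>
    refine ⟨Submodule.span k {w}, inferInstance, Submodule.span_le.2 ?_⟩
    rintro _ ⟨f, rfl⟩
    simpa using Submodule.smul_mem _ (f c) (Submodule.mem_span_singleton_self w)
  | add x y hx hy =>
    obtain ⟨P, hP, hxP⟩ := hx
    obtain ⟨Q, hQ, hyQ⟩ := hy
    refine ⟨P ⊔ Q, inferInstance, Submodule.span_le.2 ?_⟩
    rintro _ ⟨f, rfl⟩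
    simp only [map_add]
    exact Submodule.add_mem_sup (hxP (Submodule.subset_span ⟨f, rfl⟩))
      (hyQ (Submodule.subset_span ⟨f, rfl⟩))

lemma mem_range_rTensor_coeffSpace (x : V ⊗[k] C) :
    x ∈ LinearMap.range (LinearMap.rTensor C (coeffSpace x).subtype) := by
  classical
  let b := Module.Basis.ofVectorSpace k C
  have hx := (TensorProduct.equivFinsuppOfBasisRight (M := V) b).symm_apply_apply x
  rw [TensorProduct.equivFinsuppOfBasisRight_symm_apply] at hx
  have hsum : ((TensorProduct.equivFinsuppOfBasisRight b x).sum fun i m => m ⊗ₜ[k] b i) ∈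
      LinearMap.range (LinearMap.rTensor C (coeffSpace x).subtype) := by
    refine Submodule.sum_mem _ fun i _ => ?_
    have hi : TensorProduct.equivFinsuppOfBasisRight b x i ∈ coeffSpace x := by
      rw [TensorProduct.equivFinsuppOfBasisRight_apply]
      exact Submodule.subset_span ⟨b.coord i, rfl⟩
    exact ⟨(⟨_, hi⟩ : coeffSpace x) ⊗ₜ[k] b i, rfl⟩
  rwa [hx] at hsum

/-- For an arbitrary linear `β`, slicing off the last factor by `f` commutes with applying `β`
to the first factor. -/
lemma apply_rid_lTensor (β : V →ₗ[k] V ⊗[k] C) (f : C →ₗ[k] k) (x : V ⊗[k] C) :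
    β (TensorProduct.rid k V (LinearMap.lTensor V f x)) =
      LinearMap.lTensor V ((TensorProduct.rid k C).toLinearMap ∘ₗ LinearMap.lTensor C f)
        (TensorProduct.assoc k V C C (LinearMap.rTensor C β x)) := by
  induction x using TensorProduct.induction_on with
  | zero => simp
  | add x y hx hy => simp only [map_add, hx, hy]
  | tmul w c =>
    simp only [lTensor_tmul, rTensor_tmul, TensorProduct.rid_tmul, map_smul]
    induction β w using TensorProduct.induction_on with
    | zero => simp
    | add x y hx hy => simp only [smul_add, add_tmul, map_add, hx, hy]
    | tmul d e => simp

end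

/-- Let `C` be a coalgebra over a field `k` and `(V, β)` an
irreducible right `C`-comodule (i.e. `V ≠ 0` and the only subspaces `W ⊆ V` with
`β(W) ⊆ W ⊗ C` are `0` and `V`). Then `V` is finite-dimensional over `k`. -/
theorem irreducible_comodule_finiteDimensional
    {k C : Type*} [Field k] [AddCommGroup C] [Module k C] [Coalgebra k C]
    {V : Type*} [AddCommGroup V] [Module k V]
    (β : V →ₗ[k] V ⊗[k] C)
    (hβ1 : ∀ v : V,
      TensorProduct.rid k V
        ((LinearMap.lTensor V (Coalgebra.counit (R := k) (A := C))) (β v)) = v)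
    (hβ2 : ∀ v : V,
      (TensorProduct.assoc k V C C) ((LinearMap.rTensor C β) (β v)) =
        (LinearMap.lTensor V (Coalgebra.comul (R := k) (A := C))) (β v))
    (hne : ∃ v : V, v ≠ 0)
    (hirr : ∀ W : Submodule k V,
      (∀ w ∈ W, β w ∈ LinearMap.range (LinearMap.rTensor C W.subtype)) →
        W = ⊥ ∨ W = ⊤) :
    FiniteDimensional k V := by
  obtain ⟨v, hv⟩ := hne
  have hvW : v ∈ coeffSpace (β v) := Submodule.subset_span ⟨Coalgebra.counit, hβ1 v⟩
  have hfin := coeffSpace_finiteDimensional (β v)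
  obtain ⟨z, hz⟩ := mem_range_rTensor_coeffSpace (β v)
  have hsub : coeffSpace (β v) ≤
      (LinearMap.range (LinearMap.rTensor C (coeffSpace (β v)).subtype)).comap β := by
    refine Submodule.span_le.2 ?_
    rintro _ ⟨f, rfl⟩
    -- `β ((id ⊗ f)(β v)) = (id ⊗ g)(β v)`, and `id ⊗ g` preserves `W ⊗ C`
    let g : C →ₗ[k] C := ((TensorProduct.rid k C).toLinearMap ∘ₗ LinearMap.lTensor C f) ∘ₗ
      Coalgebra.comul
    refine ⟨LinearMap.lTensor _ g z, ?_⟩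
    rw [apply_rid_lTensor, hβ2, ← LinearMap.comp_apply (LinearMap.lTensor V _),
      ← LinearMap.lTensor_comp, ← LinearMap.comp_apply, LinearMap.rTensor_comp_lTensor,
      ← LinearMap.lTensor_comp_rTensor, LinearMap.comp_apply, hz]
  rcases hirr _ hsub with h | h
  · exact absurd ((Submodule.mem_bot k).1 (h ▸ hvW)) hv
  · rw [h] at hfin
    exact Module.Finite.equiv Submodule.topEquiv
end

section
/- Let C be a cosemisimple coalgebra over a field k, i.e. C is the internal direct sum of a family of subcoalgebras each of which is cosimple. Then every finite-dimensional right C-comodule V is an internal direct sum V = V_1 ⊕ … ⊕ V_n of finitely many irreducible subcomodules. -/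
open scoped TensorProduct
open TensorProduct LinearMap

/-!
The dual space `C*` acts on a right comodule `V` by `f · v = (id ⊗ f) (β v)`; this turns the
convolution product into composition (`action_conv`), so the operators `f ·` form a
subalgebra `A` of `End V` (`actionAlgebra`), and the subcomodules of `V` are exactly the
`A`-submodules. As `A` is a finite-dimensional algebra, it suffices to show that its Jacobson
radical `J` vanishes: then `A` is a semisimple ring and `V` a semisimple `A`-module.

Let `I ⊆ C*` be the preimage of `J`, a two-sided ideal, and let `E ⊆ C` be the common kernel of the
functionals in `I`. It is a subcoalgebra, and conversely `I` is exactly the set of functionals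
vanishing on `E`, because every linear form on `End V` sends `f ·` to `f c` for some `c : C`
(`exists_coeff`). For each cosimple summand `D i` with projection `π i`, either `D i ≤ E`, and then
every `f ∈ I` vanishes on `D i`; or `E ⊓ D i = ⊥`, and then the functional `ε ∘ π i` vanishes on `E`,
hence acts by an idempotent element of the nilpotent ideal `J`, that is, by zero, and so does
`f ∘ π i` for every `f`. Either way `f ∘ π i` acts by zero for every `f ∈ I` and every `i`, so that
`f` itself does (`action_eq_zero`).
-/

namespace CosemisimpleComodule

/-! ### Slice maps and tensors lying in subspaces -/

section Slices

variable {k V W C : Type*} [Field k] [AddCommGroup V] [Module k V] [AddCommGroup C] [Module k C]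
  [AddCommGroup W] [Module k W]

/-- The slice map `id ⊗ f : V ⊗ C → V` of a functional `f` on the right factor. -/
noncomputable def rslice (V : Type*) [AddCommGroup V] [Module k V] (f : Module.Dual k C) :
    V ⊗[k] C →ₗ[k] V :=
  (TensorProduct.rid k V).toLinearMap ∘ₗ LinearMap.lTensor V f

/-- The slice map `f ⊗ id : C ⊗ V → V` of a functional `f` on the left factor. -/
noncomputable def lslice (V : Type*) [AddCommGroup V] [Module k V] (f : Module.Dual k C) :
    C ⊗[k] V →ₗ[k] V :=
  (TensorProduct.lid k V).toLinearMap ∘ₗ LinearMap.rTensor V f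

@[simp] lemma rslice_tmul (f : Module.Dual k C) (v : V) (c : C) :
    rslice V f (v ⊗ₜ c) = f c • v := by simp [rslice]

@[simp] lemma lslice_tmul (f : Module.Dual k C) (v : V) (c : C) :
    lslice V f (c ⊗ₜ v) = f c • v := by simp [lslice]

lemma rslice_comm (f : Module.Dual k C) (t : V ⊗[k] C) :
    lslice V f (TensorProduct.comm k V C t) = rslice V f t := by
  induction t with
  | zero => simp
  | tmul v c => simp
  | add x y hx hy => simp only [map_add, hx, hy]

lemma rslice_rTensor (f : Module.Dual k C) (p : V →ₗ[k] W) (t : V ⊗[k] C) :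
    rslice W f (LinearMap.rTensor C p t) = p (rslice V f t) := by
  induction t with
  | zero => simp
  | tmul v c => simp
  | add x y hx hy => simp only [map_add, hx, hy]

lemma lslice_lTensor (f : Module.Dual k C) (p : V →ₗ[k] W) (t : C ⊗[k] V) :
    lslice W f (LinearMap.lTensor C p t) = p (lslice V f t) := by
  induction t with
  | zero => simp
  | tmul v c => simp
  | add x y hx hy => simp only [map_add, hx, hy]

lemma eq_zero_of_rslice {t : V ⊗[k] C} (h : ∀ f : Module.Dual k C, rslice V f t = 0) : t = 0 := by
  classical
  let b := Module.Basis.ofVectorSpace k C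
  apply (TensorProduct.equivFinsuppOfBasisRight (M := V) b).injective
  ext i
  rw [map_zero, Finsupp.zero_apply, ← h (b.coord i)]
  clear h
  induction t with
  | zero => simp
  | tmul v c => simp
  | add x y hx hy => simp only [map_add, Finsupp.add_apply, hx, hy]

lemma eq_zero_of_lslice {t : C ⊗[k] V} (h : ∀ f : Module.Dual k C, lslice V f t = 0) : t = 0 := by
  have : (TensorProduct.comm k V C).symm t = 0 := by
    apply eq_zero_of_rslice
    intro f
    rw [← rslice_comm]
    simpa using h f
  simpa using this

lemma exists_proj (U : Submodule k V) :
    ∃ p : V →ₗ[k] U, ∀ x ∈ U, (p x : V) = x := by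
  obtain ⟨p, hp⟩ := U.subtype.exists_leftInverse_of_injective U.ker_subtype
  exact ⟨p, fun x hx => congrArg Subtype.val (LinearMap.congr_fun hp ⟨x, hx⟩)⟩

lemma rTensor_proj {U : Submodule k V} {t : V ⊗[k] C} (p : V →ₗ[k] U)
    (hp : ∀ x ∈ U, (p x : V) = x) (h : ∀ f : Module.Dual k C, rslice V f t ∈ U) :
    LinearMap.rTensor C (U.subtype ∘ₗ p) t = t := by
  rw [← sub_eq_zero]
  apply eq_zero_of_rslice
  intro f
  rw [map_sub, rslice_rTensor, sub_eq_zero]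
  exact hp _ (h f)

lemma lTensor_proj {U : Submodule k V} {t : C ⊗[k] V} (p : V →ₗ[k] U)
    (hp : ∀ x ∈ U, (p x : V) = x) (h : ∀ f : Module.Dual k C, lslice V f t ∈ U) :
    LinearMap.lTensor C (U.subtype ∘ₗ p) t = t := by
  rw [← sub_eq_zero]
  apply eq_zero_of_lslice
  intro f
  rw [map_sub, lslice_lTensor, sub_eq_zero]
  exact hp _ (h f)

/-- With `t = β u` this says that a subcomodule is a subspace stable under the action of the
dual of `C`. -/
lemma mem_range_rTensor_iff {U : Submodule k V} {t : V ⊗[k] C} :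
    t ∈ LinearMap.range (LinearMap.rTensor C U.subtype) ↔
      ∀ f : Module.Dual k C, rslice V f t ∈ U := by
  constructor
  · rintro ⟨s, rfl⟩ f
    rw [rslice_rTensor]
    exact (rslice U f s).2
  · intro h
    obtain ⟨p, hp⟩ := exists_proj U
    refine ⟨LinearMap.rTensor C p t, ?_⟩
    rw [← LinearMap.comp_apply, ← LinearMap.rTensor_comp]
    exact rTensor_proj p hp h

/-- With `t = Δ x` this says that a subcoalgebra is a subspace stable under both actions of the
dual of `C` on `C`. -/
lemma mem_range_map_iff {U : Submodule k C} {t : C ⊗[k] C} :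
    t ∈ LinearMap.range (TensorProduct.map U.subtype U.subtype) ↔
      (∀ f : Module.Dual k C, rslice C f t ∈ U) ∧ ∀ f : Module.Dual k C, lslice C f t ∈ U := by
  constructor
  · rintro ⟨s, rfl⟩
    constructor <;> intro f
    · rw [← LinearMap.rTensor_comp_lTensor, LinearMap.comp_apply, rslice_rTensor]
      exact Subtype.coe_prop _
    · rw [← LinearMap.lTensor_comp_rTensor, LinearMap.comp_apply, lslice_lTensor]
      exact Subtype.coe_prop _
  · rintro ⟨hr, hl⟩
    obtain ⟨p, hp⟩ := exists_proj U
    refine ⟨TensorProduct.map p p t, ?_⟩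
    rw [← LinearMap.comp_apply, ← TensorProduct.map_comp, ← LinearMap.rTensor_comp_lTensor,
      LinearMap.comp_apply, lTensor_proj p hp hl, rTensor_proj p hp hr]

end Slices

/-! ### The action of the dual on a comodule -/

section Action

variable {k V C : Type*} [Field k] [AddCommGroup V] [Module k V] [AddCommGroup C] [Module k C]

lemma apply_rslice_eq (f g : Module.Dual k C) (t : C ⊗[k] C) :
    f (rslice C g t) = g (lslice C f t) := by
  induction t with
  | zero => simp
  | tmul v c => simp [mul_comm]
  | add x y hx hy => simp only [map_add, hx, hy]

/-- The operator `v ↦ (id ⊗ f) (β v)` by which a functional `f` on `C` acts on `V`. -/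
noncomputable def action (β : V →ₗ[k] V ⊗[k] C) : Module.Dual k C →ₗ[k] Module.End k V where
  toFun f := rslice V f ∘ₗ β
  map_add' f g := by ext v; simp [rslice, LinearMap.lTensor_add]
  map_smul' r f := by ext v; simp [rslice, LinearMap.lTensor_smul]

lemma action_apply (β : V →ₗ[k] V ⊗[k] C) (f : Module.Dual k C) (v : V) :
    action β f v = rslice V f (β v) := rfl

/-- Every linear form on `End V` is, on the operators `action β f`, evaluation of `f` at an element
of `C` (a combination of matrix coefficients of `V`). -/
lemma exists_coeff [FiniteDimensional k V] (β : V →ₗ[k] V ⊗[k] C)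
    (φ : Module.Dual k (Module.End k V)) :
    ∃ c : C, ∀ f : Module.Dual k C, φ (action β f) = f c := by
  let b := Module.finBasis k V
  -- `c = ∑ φ (E j i) • c i j`, with `E j i` the matrix units and `c i j` the coefficients of `β`
  refine ⟨∑ i, ∑ j, φ ((b.coord i).smulRight (b j)) • lslice C (b.coord j) (β (b i)), fun f => ?_⟩
  have key : action β f =
      ∑ i, ∑ j, f (lslice C (b.coord j) (β (b i))) • (b.coord i).smulRight (b j) := by
    apply b.ext
    intro l
    have h : ∀ (t : V ⊗[k] C) j, f (lslice C (b.coord j) t) = b.coord j (rslice V f t) := by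
      intro t j
      induction t with
      | zero => simp
      | tmul v c => simp [mul_comm]
      | add x y hx hy => simp only [map_add, hx, hy]
    simp only [LinearMap.sum_apply, LinearMap.smul_apply, LinearMap.smulRight_apply, h,
      ← action_apply]
    rw [Finset.sum_eq_single l]
    · simp
    · intro i _ hi
      simp [Finsupp.single_eq_of_ne hi]
    · simp
  rw [key]
  simp [mul_comm]

variable [Coalgebra k C]

/-- The convolution product `(f * g) c = ∑ f c₁ * g c₂` on the dual of a coalgebra. -/
noncomputable def conv (f g : Module.Dual k C) : Module.Dual k C :=
  f ∘ₗ rslice C g ∘ₗ Coalgebra.comul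

lemma conv_apply (f g : Module.Dual k C) (c : C) :
    conv f g c = f (rslice C g (Coalgebra.comul c)) := rfl

lemma conv_apply' (f g : Module.Dual k C) (c : C) :
    conv f g c = g (lslice C f (Coalgebra.comul c)) := apply_rslice_eq _ _ _

lemma action_conv (β : V →ₗ[k] V ⊗[k] C)
    (hβ2 : ∀ v : V,
      (TensorProduct.assoc k V C C) ((LinearMap.rTensor C β) (β v)) =
        (LinearMap.lTensor V (Coalgebra.comul (R := k) (A := C))) (β v))
    (f g : Module.Dual k C) : action β (conv f g) = action β f * action β g := by
  ext v
  -- `S = id ⊗ f ⊗ g`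
  let S : V ⊗[k] (C ⊗[k] C) →ₗ[k] V := rslice V (f ∘ₗ rslice C g)
  have h1 : ∀ t : V ⊗[k] C, S (LinearMap.lTensor V Coalgebra.comul t) = rslice V (conv f g) t := by
    intro t
    induction t with
    | zero => simp
    | tmul v c => simp [S, conv_apply]
    | add x y hx hy => simp only [map_add, hx, hy]
  have h2 : ∀ t : (V ⊗[k] C) ⊗[k] C,
      S (TensorProduct.assoc k V C C t) = rslice V f (rslice (V ⊗[k] C) g t) := by
    intro t
    induction t with
    | zero => simp
    | tmul x c =>
      induction x with
      | zero => simp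
      | tmul v d => simp [S, mul_smul]
      | add x y hx hy => simp only [map_add, hx, hy, TensorProduct.add_tmul]
    | add x y hx hy => simp only [map_add, hx, hy]
  rw [Module.End.mul_apply, action_apply, action_apply, action_apply, ← h1, ← hβ2, h2,
    rslice_rTensor]

end Action

/-! ### Nilpotent ideals over a cosemisimple coalgebra -/

section Cosemisimple

variable {k V C ι : Type*} [Field k] [AddCommGroup V] [Module k V] [AddCommGroup C] [Module k C]
  [DecidableEq ι]

/-- The projection of `C` onto the summand `D i`, as an endomorphism of `C`. -/
noncomputable def proj (D : ι → Submodule k C) [DirectSum.Decomposition D] (i : ι) : C →ₗ[k] C :=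
  (D i).subtype ∘ₗ DirectSum.component k ι _ i ∘ₗ (DirectSum.decomposeLinearEquiv D).toLinearMap

lemma proj_apply (D : ι → Submodule k C) [DirectSum.Decomposition D] (i : ι) (c : C) :
    proj D i c = DirectSum.decompose D c i := rfl

variable [Coalgebra k C]

/-- The functional `ε ∘ π i` acts on `C` from the left as the projection onto `D i`. -/
lemma rslice_counit_proj (D : ι → Submodule k C) [DirectSum.Decomposition D]
    (hD : ∀ i, ∀ x ∈ D i, Coalgebra.comul (R := k) x ∈
      LinearMap.range (TensorProduct.map (D i).subtype (D i).subtype)) (i : ι) (c : C) :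
    rslice C (Coalgebra.counit ∘ₗ proj D i) (Coalgebra.comul (R := k) c) = proj D i c := by
  have counit_slice : ∀ c : C, rslice C Coalgebra.counit (Coalgebra.comul (R := k) c) = c := by
    intro c
    simp [rslice]
  induction c using DirectSum.Decomposition.inductionOn D with
  | zero => simp
  | add x y hx hy => simp only [map_add, hx, hy]
  | @homogeneous j m =>
    obtain ⟨s, hs⟩ := hD j m m.2
    have h : ∀ s : D j ⊗[k] D j, rslice C (Coalgebra.counit ∘ₗ proj D i)
        (TensorProduct.map (D j).subtype (D j).subtype s) = if j = i then rslice C Coalgebra.counit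
          (TensorProduct.map (D j).subtype (D j).subtype s) else 0 := by
      intro s
      induction s with
      | zero => simp
      | tmul x y =>
        by_cases hij : j = i
        · subst hij
          simp [proj_apply]
        · have : proj D i y = 0 := DirectSum.decompose_of_mem_ne D y.2 hij
          simp [this, hij]
      | add x y hx hy =>
        simp only [map_add, hx, hy]
        split_ifs <;> simp
    rw [← hs, h, hs, counit_slice, proj_apply]
    split_ifs with hij
    · subst hij
      simp
    · rw [DirectSum.decompose_of_mem_ne D m.2 hij]

/-- If `J` meets the algebra of operators `action β f` in a two-sided ideal of nilpotent operators,
then this ideal is zero. -/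
lemma action_eq_zero [FiniteDimensional k V] (D : ι → Submodule k C) [DirectSum.Decomposition D]
    (hD : ∀ i, ∀ x ∈ D i, Coalgebra.comul (R := k) x ∈
      LinearMap.range (TensorProduct.map (D i).subtype (D i).subtype))
    (hcosimple : ∀ i, ∀ E : Submodule k C, E ≤ D i →
      (∀ x ∈ E, Coalgebra.comul (R := k) x ∈
        LinearMap.range (TensorProduct.map E.subtype E.subtype)) →
      E = ⊥ ∨ E = D i)
    (β : V →ₗ[k] V ⊗[k] C)
    (hmul : ∀ f g, action β (conv f g) = action β f * action β g)
    (J : Submodule k (Module.End k V))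
    (hl : ∀ f g, action β f ∈ J → action β g * action β f ∈ J)
    (hr : ∀ f g, action β f ∈ J → action β f * action β g ∈ J)
    (hnil : ∀ f, action β f ∈ J → IsNilpotent (action β f))
    (f : Module.Dual k C) (hf : action β f ∈ J) : action β f = 0 := by
  -- `E` is the common kernel of the functionals acting through `J`
  let E : Submodule k C := (J.comap (action β)).dualCoannihilator
  have hE : ∀ c, c ∈ E ↔ ∀ f, action β f ∈ J → f c = 0 := by
    intro c
    simp [E, Submodule.mem_dualCoannihilator]
  have hEr : ∀ c ∈ E, ∀ g, rslice C g (Coalgebra.comul (R := k) c) ∈ E := by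
    intro c hc g
    rw [hE] at hc ⊢
    intro f hf
    rw [← conv_apply]
    exact hc _ (by rw [hmul]; exact hr _ _ hf)
  have hEl : ∀ c ∈ E, ∀ g, lslice C g (Coalgebra.comul (R := k) c) ∈ E := by
    intro c hc g
    rw [hE] at hc ⊢
    intro f hf
    rw [← conv_apply']
    exact hc _ (by rw [hmul]; exact hl _ _ hf)
  -- a functional vanishing on `E` acts through `J`
  have hEperp : ∀ f : Module.Dual k C, (∀ c ∈ E, f c = 0) → action β f ∈ J := by
    intro f hfE
    rw [← Subspace.forall_mem_dualAnnihilator_apply_eq_zero_iff]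
    intro φ hφ
    obtain ⟨c, hc⟩ := exists_coeff β φ
    rw [hc]
    apply hfE
    rw [hE]
    intro g hg
    rw [← hc]
    exact (Submodule.mem_dualAnnihilator φ).1 hφ _ hg
  have hcomp : ∀ i, ∀ g : Module.Dual k C,
      conv g (Coalgebra.counit ∘ₗ proj D i) = g ∘ₗ proj D i := by
    intro i g
    ext c
    rw [conv_apply, rslice_counit_proj D hD, LinearMap.comp_apply]
  have hzero : ∀ i, action β (f ∘ₗ proj D i) = 0 := by
    intro i
    rcases hcosimple i (E ⊓ D i) inf_le_right (by
      rintro x ⟨hxE, hxD⟩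
      have := mem_range_map_iff.1 (hD i x hxD)
      exact mem_range_map_iff.2 ⟨fun g => ⟨hEr x hxE g, this.1 g⟩,
        fun g => ⟨hEl x hxE g, this.2 g⟩⟩) with h | h
    · let e : Module.Dual k C := Coalgebra.counit ∘ₗ proj D i
      have heJ : action β e ∈ J := by
        apply hEperp
        intro c hc
        have hmem : proj D i c ∈ E ⊓ D i := by
          refine ⟨?_, by rw [proj_apply]; exact Subtype.coe_prop _⟩
          rw [← rslice_counit_proj D hD]
          exact hEr c hc _
        rw [h, Submodule.mem_bot] at hmem
        simp [e, hmem]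
      have hidem : action β e * action β e = action β e := by
        rw [← hmul, hcomp]
        congr 1
        ext c
        simp [e, proj_apply]
      have he0 : action β e = 0 := by
        obtain ⟨n, hn⟩ := hnil e heJ
        have hi : IsIdempotentElem (action β e) := hidem
        have := hi.pow_succ_eq n
        rw [← this, pow_succ, hn, zero_mul]
      rw [← hcomp, hmul, he0, mul_zero]
    · have : f ∘ₗ proj D i = 0 := by
        ext c
        have : proj D i c ∈ E ⊓ D i := by
          rw [h, proj_apply]
          exact Subtype.coe_prop _
        exact (hE _).1 this.1 f hf
      rw [this, map_zero]
  rw [← Module.forall_dual_apply_eq_zero_iff k]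
  intro φ
  obtain ⟨c, hc⟩ := exists_coeff β φ
  classical
  rw [hc, ← DirectSum.sum_support_decompose D c, map_sum]
  apply Finset.sum_eq_zero
  intro i _
  have := hc (f ∘ₗ proj D i)
  rw [hzero i, map_zero] at this
  exact this.symm

/-- The algebra of operators on `V` by which the functionals on `C` act. -/
noncomputable def actionAlgebra (β : V →ₗ[k] V ⊗[k] C)
    (hβ1 : ∀ v : V,
      TensorProduct.rid k V
        ((LinearMap.lTensor V (Coalgebra.counit (R := k) (A := C))) (β v)) = v)
    (hmul : ∀ f g, action β (conv f g) = action β f * action β g) :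
    Subalgebra k (Module.End k V) :=
  (LinearMap.range (action β)).toSubalgebra
    ⟨Coalgebra.counit, LinearMap.ext hβ1⟩
    (by
      rintro _ _ ⟨f, rfl⟩ ⟨g, rfl⟩
      exact ⟨conv f g, hmul f g⟩)

end Cosemisimple

end CosemisimpleComodule

/-- Let `C` be a cosemisimple coalgebra over a field `k`, i.e.
`C` is the internal direct sum of a family `D` of subcoalgebras each of which is
cosimple.  Then every finite-dimensional right `C`-comodule `V` is the internal
direct sum of finitely many irreducible subcomodules. -/
theorem cosemisimple_comodule_direct_sum_of_irreducibles
    {k C : Type*} [Field k] [AddCommGroup C] [Module k C] [Coalgebra k C]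
    {ι : Type*} [DecidableEq ι] (D : ι → Submodule k C)
    (hinternal : DirectSum.IsInternal D)
    (hsubcoalg : ∀ i, ∀ x ∈ D i, Coalgebra.comul (R := k) x ∈
      LinearMap.range (TensorProduct.map (D i).subtype (D i).subtype))
    (hcosimple : ∀ i, ∀ E : Submodule k C, E ≤ D i →
      (∀ x ∈ E, Coalgebra.comul (R := k) x ∈
        LinearMap.range (TensorProduct.map E.subtype E.subtype)) →
      E = ⊥ ∨ E = D i)
    {V : Type*} [AddCommGroup V] [Module k V] [FiniteDimensional k V]
    (β : V →ₗ[k] V ⊗[k] C)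
    (hβ1 : ∀ v : V,
      TensorProduct.rid k V
        ((LinearMap.lTensor V (Coalgebra.counit (R := k) (A := C))) (β v)) = v)
    (hβ2 : ∀ v : V,
      (TensorProduct.assoc k V C C) ((LinearMap.rTensor C β) (β v)) =
        (LinearMap.lTensor V (Coalgebra.comul (R := k) (A := C))) (β v)) :
    ∃ (n : ℕ) (W : Fin n → Submodule k V),
      DirectSum.IsInternal W ∧
      ∀ i : Fin n,
        (∀ w ∈ W i, β w ∈ LinearMap.range (LinearMap.rTensor C (W i).subtype)) ∧
        W i ≠ ⊥ ∧
        (∀ U : Submodule k V, U ≤ W i →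
          (∀ u ∈ U, β u ∈ LinearMap.range (LinearMap.rTensor C U.subtype)) →
          U = ⊥ ∨ U = W i) := by
  classical
  let _ : DirectSum.Decomposition D := hinternal.chooseDecomposition
  have hmul := CosemisimpleComodule.action_conv β hβ2
  let A := CosemisimpleComodule.actionAlgebra β hβ1 hmul
  have hA : ∀ f, CosemisimpleComodule.action β f ∈ A := fun f => ⟨f, rfl⟩
  have : IsArtinianRing A := IsArtinianRing.of_finite k A
  have hjac : Ring.jacobson A = ⊥ := by
    let J : Submodule k (Module.End k V) :=
      ((Ring.jacobson A).restrictScalars k).map A.val.toLinearMap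
    have hJ : ∀ x : A, (x : Module.End k V) ∈ J ↔ x ∈ Ring.jacobson A := by
      intro x
      constructor
      · rintro ⟨y, hy, hyx⟩
        have : y = x := Subtype.ext hyx
        exact this ▸ hy
      · intro hx
        exact ⟨x, hx, rfl⟩
    rw [eq_bot_iff]
    intro x hx
    obtain ⟨f, hf⟩ := x.2
    have h0 : CosemisimpleComodule.action β f = 0 := by
      apply CosemisimpleComodule.action_eq_zero D hsubcoalg hcosimple β hmul J
      · intro f g hf
        exact (hJ (⟨_, hA g⟩ * ⟨_, hA f⟩)).2
          (Ideal.mul_mem_left _ _ ((hJ ⟨_, hA f⟩).1 hf))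
      · intro f g hf
        exact (hJ (⟨_, hA f⟩ * ⟨_, hA g⟩)).2
          (Ideal.mul_mem_right _ _ ((hJ ⟨_, hA f⟩).1 hf))
      · intro f hf
        obtain ⟨n, hn⟩ := IsSemiprimaryRing.isNilpotent (R := A)
        refine ⟨n, ?_⟩
        have := Ideal.pow_mem_pow ((hJ ⟨_, hA f⟩).1 hf) n
        rw [hn] at this
        exact congrArg Subtype.val this
      · exact hf ▸ (hJ x).2 hx
    exact Subtype.ext (hf.symm.trans h0)
  have : IsSemisimpleRing A := IsArtinianRing.isSemisimpleRing_iff_jacobson.2 hjac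
  have : IsNoetherian A V := isNoetherian_of_tower k inferInstance
  obtain ⟨s, hind, hsup, hsimple⟩ := IsSemisimpleModule.exists_sSupIndep_sSup_simples_eq_top A V
  have hfin : Finite s := WellFoundedGT.finite_of_sSupIndep hind
  -- subcomodules are exactly the `A`-submodules
  have hsub : ∀ U : Submodule k V,
      (∀ u ∈ U, β u ∈ LinearMap.range (LinearMap.rTensor C U.subtype)) ↔
        ∃ N : Submodule A V, N.restrictScalars k = U := by
    intro U
    simp only [CosemisimpleComodule.mem_range_rTensor_iff]
    constructor
    · intro h
      refine ⟨{ U with smul_mem' := ?_ }, rfl⟩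
      rintro ⟨_, f, rfl⟩ u hu
      exact h u hu f
    · rintro ⟨N, rfl⟩ u hu f
      exact N.smul_mem ⟨_, hA f⟩ hu
  let e := (Finite.equivFin s).symm
  refine ⟨Nat.card s, fun i => (e i).1.restrictScalars k, ?_, fun i => ⟨?_, ?_, ?_⟩⟩
  · apply DirectSum.isInternal_submodule_of_iSupIndep_of_iSup_eq_top
    · have h : iSupIndep (fun i => (e i).1) := ((sSupIndep_iff s).1 hind).comp e.injective
      intro i
      have := h i
      rw [disjoint_iff] at this ⊢
      simp only [← Submodule.restrictScalars_iSup, ← Submodule.restrictScalars_inf, this,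
        Submodule.restrictScalars_bot]
    · rw [← Submodule.restrictScalars_iSup, e.iSup_comp (g := fun x : s => x.1),
        ← sSup_eq_iSup', hsup, Submodule.restrictScalars_top]
  · exact (hsub _).2 ⟨_, rfl⟩
  · have := hsimple _ (e i).2
    rw [Ne, Submodule.restrictScalars_eq_bot_iff]
    exact (isSimpleModule_iff_isAtom.1 this).1
  · intro U hU hUsub
    obtain ⟨N, rfl⟩ := (hsub U).1 hUsub
    have := isSimpleModule_iff_isAtom.1 (hsimple _ (e i).2)
    rcases this.le_iff.1 (show N ≤ (e i).1 from hU) with h | h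
    · exact Or.inl (by rw [h, Submodule.restrictScalars_bot])
    · exact Or.inr (by rw [h])
end
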